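/- arXiv:1302.3454 — 4 statements merged into one kernel-verified Lean document; each statement's English description precedes it below -/
import Mathlib

section
/- Let b > 0 be real and set c_b := i(b+b⁻¹)/2. For every ε with 0 < ε < π·min(b,b⁻¹) and every z ∈ ℂ with |Im z| < (b+b⁻¹)/2, the integral ∫_ℝ e^{−2iz(t+iε)} / ( (t+iε)·sinh(b(t+iε))·sinh(b⁻¹(t+iε)) ) dt converges absolutely, its value is independent of the choice of ε, and the function e_b(z) := exp( (1/4)·∫_ℝ e^{−2iz(t+iε)} / ( (t+iε)·sinh(b(t+iε))·sinh(b⁻¹(t+iε)) ) dt ) is holomorphic and nowhere vanishing on the strip { z : |Im z| < (b+b⁻¹)/2 }. -/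
open MeasureTheory Complex Real Filter Topology

noncomputable section

/-- The special point `c_b = i(b+b⁻¹)/2`. -/
def cb (b : ℝ) : ℂ := Complex.I * ((b : ℂ) + (b : ℂ)⁻¹) / 2

/-- The integrand in the integral representation of the noncompact quantum dilogarithm,
with the contour `ℝ + iε` passing above the pole at `w = 0`. -/
def ebIntegrand (b ε : ℝ) (z : ℂ) (t : ℝ) : ℂ :=
  Complex.exp (-2 * Complex.I * z * ((t : ℂ) + Complex.I * (ε : ℂ))) /
    (((t : ℂ) + Complex.I * (ε : ℂ)) *
      Complex.sinh ((b : ℂ) * ((t : ℂ) + Complex.I * (ε : ℂ))) *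
      Complex.sinh ((b : ℂ)⁻¹ * ((t : ℂ) + Complex.I * (ε : ℂ))))

/-- The noncompact quantum dilogarithm defined with contour parameter `ε`. -/
def ebE (b ε : ℝ) (z : ℂ) : ℂ :=
  Complex.exp ((1 / 4 : ℂ) * ∫ t : ℝ, ebIntegrand b ε z t)

/-- The noncompact quantum dilogarithm `e_b` (canonical choice of contour parameter). -/
def eb (b : ℝ) (z : ℂ) : ℂ := ebE b (π * min b b⁻¹ / 2) z

lemma sinh_lower (b ε t : ℝ) (hs : 0 ≤ Real.sin (b * ε)) (hb : 0 < b) :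
    Real.sin (b * ε) * (Real.exp (b * |t|) / 2) ≤
      ‖Complex.sinh ((b : ℂ) * ((t : ℂ) + Complex.I * (ε : ℂ)))‖ := by
  have h1 : ((b : ℂ) * ((t : ℂ) + Complex.I * (ε : ℂ))) = ((b * t : ℝ) : ℂ) + ((b * ε : ℝ) : ℂ) * Complex.I := by
    push_cast; ring
  have h2 : (Complex.sinh ((b : ℂ) * ((t : ℂ) + Complex.I * (ε : ℂ)))).im
      = Real.cosh (b * t) * Real.sin (b * ε) := by
    rw [h1, Complex.sinh_add, Complex.sinh_mul_I, Complex.cosh_mul_I, ← Complex.ofReal_sinh,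
      ← Complex.ofReal_cosh, ← Complex.ofReal_sin, ← Complex.ofReal_cos]
    simp only [Complex.add_im, Complex.mul_im, Complex.mul_re, Complex.ofReal_re, Complex.ofReal_im,
      Complex.I_re, Complex.I_im]
    ring
  have h3 := (le_abs_self _).trans (Complex.abs_im_le_norm (Complex.sinh ((b : ℂ) * ((t : ℂ) + Complex.I * (ε : ℂ)))))
  rw [h2] at h3
  have h4 : Real.exp (b * |t|) / 2 ≤ Real.cosh (b * t) := by
    rw [← Real.cosh_abs, abs_mul, abs_of_pos hb, Real.cosh_eq]
    have := Real.exp_pos (-(b * |t|))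
    linarith
  nlinarith

lemma norm_cexp_aux (ε : ℝ) (z : ℂ) (t : ℝ) :
    ‖Complex.exp (-2 * Complex.I * z * ((t : ℂ) + Complex.I * (ε : ℂ)))‖ ≤
      Real.exp (2 * z.re * ε) * Real.exp (2 * |z.im| * |t|) := by
  rw [Complex.norm_exp, ← Real.exp_add, Real.exp_le_exp]
  have : (-2 * Complex.I * z * ((t : ℂ) + Complex.I * (ε : ℂ))).re = 2 * z.re * ε + 2 * (z.im * t) := by
    simp; ring
  rw [this, mul_assoc 2 |z.im|, ← abs_mul]
  linarith [le_abs_self (z.im * t)]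

lemma sin_pos_aux {b ε : ℝ} (hb : 0 < b) (h0 : 0 < ε) (h1 : ε < π * min b b⁻¹) :
    0 < Real.sin (b * ε) ∧ 0 < Real.sin (b⁻¹ * ε) := by
  have hbi : 0 < b⁻¹ := inv_pos.2 hb
  have e : b * b⁻¹ = 1 := mul_inv_cancel₀ hb.ne'
  have k1 : ε < π * b := h1.trans_le (by gcongr; exact min_le_left _ _)
  have k2 : ε < π * b⁻¹ := h1.trans_le (by gcongr; exact min_le_right _ _)
  constructor
  · apply Real.sin_pos_of_pos_of_lt_pi (by positivity)
    have := mul_lt_mul_of_pos_left k2 hb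
    nlinarith
  · apply Real.sin_pos_of_pos_of_lt_pi (by positivity)
    have := mul_lt_mul_of_pos_left k1 hbi
    nlinarith

/-- the constant in the bound -/
def KK (b ε x : ℝ) : ℝ := 4 * Real.exp (2 * x * ε) / (Real.sin (b * ε) * Real.sin (b⁻¹ * ε))

lemma w_ne {ε : ℝ} (h0 : 0 < ε) (t : ℝ) : ((t : ℂ) + Complex.I * (ε : ℂ)) ≠ 0 := by
  intro h
  have := congrArg Complex.im h
  simp at this
  exact h0.ne' this

lemma sinh_ne {b ε : ℝ} (hb : 0 < b) (hs : 0 < Real.sin (b * ε)) (t : ℝ) :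
    Complex.sinh ((b : ℂ) * ((t : ℂ) + Complex.I * (ε : ℂ))) ≠ 0 := by
  have := sinh_lower b ε t hs.le hb
  rw [← norm_pos_iff]
  exact lt_of_lt_of_le (by positivity) this

lemma bound1 {b ε : ℝ} (hb : 0 < b) (h0 : 0 < ε) (h1 : ε < π * min b b⁻¹) (z : ℂ) (t : ℝ) :
    ‖((t : ℂ) + Complex.I * (ε : ℂ)) * ebIntegrand b ε z t‖ ≤
      KK b ε z.re * Real.exp (-(b + b⁻¹ - 2 * |z.im|) * |t|) := by
  obtain ⟨s1, s2⟩ := sin_pos_aux hb h0 h1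
  have hbi : 0 < b⁻¹ := inv_pos.2 hb
  have l1 := sinh_lower b ε t s1.le hb
  have l2 := sinh_lower b⁻¹ ε t s2.le hbi
  rw [Complex.ofReal_inv] at l2
  have l3 := norm_cexp_aux ε z t
  have hw := w_ne h0 t
  have e1 : ((t : ℂ) + Complex.I * (ε : ℂ)) * ebIntegrand b ε z t =
     Complex.exp (-2 * Complex.I * z * ((t : ℂ) + Complex.I * (ε : ℂ))) /
    (Complex.sinh ((b : ℂ) * ((t : ℂ) + Complex.I * (ε : ℂ))) *
      Complex.sinh ((b : ℂ)⁻¹ * ((t : ℂ) + Complex.I * (ε : ℂ)))) := by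
    unfold ebIntegrand
    rw [mul_assoc (_ + _), ← mul_div_assoc, mul_div_mul_left _ _ hw]
  rw [e1, norm_div, norm_mul]
  calc _ ≤ (Real.exp (2 * z.re * ε) * Real.exp (2 * |z.im| * |t|)) /
        ((Real.sin (b * ε) * (Real.exp (b * |t|) / 2)) * (Real.sin (b⁻¹ * ε) * (Real.exp (b⁻¹ * |t|) / 2))) := by
        gcongr
    _ = _ := by
        have : Real.exp (-(b + b⁻¹ - 2 * |z.im|) * |t|) =
          Real.exp (2 * |z.im| * |t|) / (Real.exp (b * |t|) * Real.exp (b⁻¹ * |t|)) := by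
          rw [← Real.exp_add, ← Real.exp_sub]; congr 1; ring
        rw [this, KK]
        field_simp
        ring

lemma KK_pos {b ε : ℝ} (hb : 0 < b) (h0 : 0 < ε) (h1 : ε < π * min b b⁻¹) (x : ℝ) :
    0 < KK b ε x := by
  obtain ⟨s1, s2⟩ := sin_pos_aux hb h0 h1
  unfold KK; positivity

lemma bound2 {b ε : ℝ} (hb : 0 < b) (h0 : 0 < ε) (h1 : ε < π * min b b⁻¹) (z : ℂ) (t : ℝ) :
    ‖ebIntegrand b ε z t‖ ≤
      KK b ε z.re / ε * Real.exp (-(b + b⁻¹ - 2 * |z.im|) * |t|) := by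
  have := bound1 hb h0 h1 z t
  rw [norm_mul] at this
  have h2 : ε ≤ ‖((t : ℂ) + Complex.I * (ε : ℂ))‖ := by
    have := (le_abs_self _).trans (Complex.abs_im_le_norm ((t : ℂ) + Complex.I * (ε : ℂ)))
    simpa using this
  rw [div_mul_eq_mul_div, le_div_iff₀ h0]
  refine le_trans ?_ this
  rw [mul_comm]
  gcongr

lemma integrable_exp_abs {a : ℝ} (ha : 0 < a) : Integrable (fun t : ℝ => Real.exp (-a * |t|)) := by
  rw [← integrableOn_univ, ← Set.Iic_union_Ioi (a := (0 : ℝ))]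
  refine IntegrableOn.union ?_ ?_
  · refine (integrableOn_exp_mul_Iic ha 0).congr_fun (fun t ht => ?_) measurableSet_Iic
    simp only [Set.mem_Iic] at ht
    simp [abs_of_nonpos ht]
  · refine (integrableOn_exp_mul_Ioi (a := -a) (by linarith) 0).congr_fun (fun t ht => ?_) measurableSet_Ioi
    simp only [Set.mem_Ioi] at ht
    simp [abs_of_pos ht]

lemma cont_eb {b ε : ℝ} (hb : 0 < b) (h0 : 0 < ε) (h1 : ε < π * min b b⁻¹) (z : ℂ) :
    Continuous (ebIntegrand b ε z) := by
  obtain ⟨s1, s2⟩ := sin_pos_aux hb h0 h1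
  unfold ebIntegrand
  refine Continuous.div (by fun_prop) (by fun_prop) (fun t => ?_)
  refine mul_ne_zero (mul_ne_zero (w_ne h0 t) (sinh_ne hb s1 t)) ?_
  have := sinh_ne (inv_pos.2 hb) s2 t
  rwa [Complex.ofReal_inv] at this

lemma integ_eb {b ε : ℝ} (hb : 0 < b) (h0 : 0 < ε) (h1 : ε < π * min b b⁻¹) (z : ℂ)
    (hz : |z.im| < (b + b⁻¹) / 2) : Integrable (ebIntegrand b ε z) :=
  ((integrable_exp_abs (a := b + b⁻¹ - 2 * |z.im|) (by linarith)).const_mul _).mono'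
    (cont_eb hb h0 h1 z).aestronglyMeasurable (Eventually.of_forall (bound2 hb h0 h1 z))

/-- the integrand as a function of the complex variable -/
def ff (b : ℝ) (z w : ℂ) : ℂ :=
  Complex.exp (-2 * Complex.I * z * w) /
    (w * Complex.sinh ((b : ℂ) * w) * Complex.sinh ((b : ℂ)⁻¹ * w))

lemma ff_eq (b ε : ℝ) (z : ℂ) (t : ℝ) : ff b z (t + ε * Complex.I) = ebIntegrand b ε z t := by
  unfold ff ebIntegrand
  rw [mul_comm (ε : ℂ)]

lemma indep {b ε ε' : ℝ} (hb : 0 < b) (h0 : 0 < ε) (h1 : ε < π * min b b⁻¹)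
    (h0' : 0 < ε') (h1' : ε' < π * min b b⁻¹) (z : ℂ) (hz : |z.im| < (b + b⁻¹) / 2) :
    ∫ t : ℝ, ebIntegrand b ε z t = ∫ t : ℝ, ebIntegrand b ε' z t := by
  have hmem : ∀ y ∈ Set.uIcc ε ε', 0 < y ∧ y < π * min b b⁻¹ := by
    intro y hy
    rw [Set.mem_uIcc] at hy
    rcases hy with hy | hy <;> constructor <;> linarith [hy.1, hy.2]
  have hrect : ∀ T : ℝ, (∫ x : ℝ in -T..T, ebIntegrand b ε z x) - (∫ x : ℝ in -T..T, ebIntegrand b ε' z x)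
      + Complex.I • (∫ y : ℝ in ε..ε', ebIntegrand b y z T)
      - Complex.I • (∫ y : ℝ in ε..ε', ebIntegrand b y z (-T)) = 0 := by
    intro T
    have := Complex.integral_boundary_rect_eq_zero_of_differentiableOn (ff b z) ⟨-T, ε⟩ ⟨T, ε'⟩ ?_
    · simpa only [ff_eq] using this
    · intro w hw
      obtain ⟨y0, y1⟩ := hmem w.im hw.2
      obtain ⟨s1, s2⟩ := sin_pos_aux hb y0 y1
      apply DifferentiableAt.differentiableWithinAt
      have ew : w = (w.re : ℂ) + Complex.I * w.im := by
        rw [mul_comm, Complex.re_add_im]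
      have n1 := w_ne y0 w.re
      have n2 := sinh_ne hb s1 w.re
      have n3 := sinh_ne (inv_pos.2 hb) s2 w.re
      rw [Complex.ofReal_inv] at n3
      rw [← ew] at n1 n2 n3
      unfold ff
      refine DifferentiableAt.div (by fun_prop) (by fun_prop) (mul_ne_zero (mul_ne_zero n1 n2) n3)
  set a := b + b⁻¹ - 2 * |z.im| with ha
  have hapos : 0 < a := by rw [ha]; linarith
  obtain ⟨C, hC⟩ : ∃ C, ∀ y ∈ Set.uIcc ε ε', ‖KK b y z.re / y‖ ≤ C := by
    refine isCompact_uIcc.exists_bound_of_continuousOn ?_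
    unfold KK
    refine ContinuousOn.div (ContinuousOn.div (by fun_prop) (by fun_prop) ?_) (by fun_prop) ?_
    · intro y hy
      obtain ⟨s1, s2⟩ := sin_pos_aux hb (hmem y hy).1 (hmem y hy).2
      positivity
    · intro y hy
      exact (hmem y hy).1.ne'
  have hvb : ∀ T : ℝ, ‖∫ y : ℝ in ε..ε', ebIntegrand b y z T‖ ≤ C * Real.exp (-a * |T|) * |ε' - ε| := by
    intro T
    apply intervalIntegral.norm_integral_le_of_norm_le_const
    intro y hy
    have hy' := Set.uIoc_subset_uIcc hy
    refine (bound2 hb (hmem y hy').1 (hmem y hy').2 z T).trans ?_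
    gcongr
    exact (le_abs_self _).trans (hC y hy')
  have hexp : Tendsto (fun T : ℝ => C * Real.exp (-a * |T|) * |ε' - ε|) atTop (𝓝 0) := by
    have : Tendsto (fun T : ℝ => Real.exp (-a * |T|)) atTop (𝓝 0) := by
      apply Real.tendsto_exp_atBot.comp
      exact (tendsto_abs_atTop_atTop).const_mul_atTop_of_neg (by linarith)
    simpa using (this.const_mul C).mul_const |ε' - ε|
  have v1 : Tendsto (fun T : ℝ => ∫ y : ℝ in ε..ε', ebIntegrand b y z T) atTop (𝓝 0) :=
    squeeze_zero_norm hvb hexp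
  have v2 : Tendsto (fun T : ℝ => ∫ y : ℝ in ε..ε', ebIntegrand b y z (-T)) atTop (𝓝 0) :=
    squeeze_zero_norm (fun T => by simpa using hvb (-T)) hexp
  have i1 := intervalIntegral_tendsto_integral (integ_eb hb h0 h1 z hz) tendsto_neg_atTop_atBot tendsto_id
  have i2 := intervalIntegral_tendsto_integral (integ_eb hb h0' h1' z hz) tendsto_neg_atTop_atBot tendsto_id
  have tot := ((i1.sub i2).add (v1.const_smul Complex.I)).sub (v2.const_smul Complex.I)
  have tot2 := tot.congr (fun T => hrect T)
  have := tendsto_nhds_unique tot2 tendsto_const_nhds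
  simp only [smul_zero, add_zero, sub_zero] at this
  exact sub_eq_zero.1 this

lemma diff_eb {b ε : ℝ} (hb : 0 < b) (h0 : 0 < ε) (h1 : ε < π * min b b⁻¹) (z : ℂ)
    (hz : |z.im| < (b + b⁻¹) / 2) :
    DifferentiableAt ℂ (fun z => ∫ t : ℝ, ebIntegrand b ε z t) z := by
  obtain ⟨s1, s2⟩ := sin_pos_aux hb h0 h1
  obtain ⟨r, hr0, hr⟩ : ∃ r, 0 < r ∧ |z.im| + r < (b + b⁻¹) / 2 :=
    ⟨((b + b⁻¹) / 2 - |z.im|) / 2, by linarith, by linarith⟩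
  have key := hasDerivAt_integral_of_dominated_loc_of_deriv_le (𝕜 := ℂ) (μ := volume)
    (F := fun z t => ebIntegrand b ε z t) (x₀ := z)
    (F' := fun z t => -2 * Complex.I * (((t : ℂ) + Complex.I * (ε : ℂ)) * ebIntegrand b ε z t))
    (bound := fun t => 2 * (KK b ε (z.re + r) * Real.exp (-(b + b⁻¹ - 2 * (|z.im| + r)) * |t|)))
    (Metric.ball_mem_nhds z hr0)
    (Eventually.of_forall fun x => (cont_eb hb h0 h1 x).aestronglyMeasurable)
    (integ_eb hb h0 h1 z hz) ?_ ?_ ?_ ?_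
  · exact key.2.differentiableAt
  · have := cont_eb hb h0 h1 z
    exact Continuous.aestronglyMeasurable (by fun_prop)
  · refine Eventually.of_forall fun t x hx => ?_
    have hx' : ‖x - z‖ < r := by simpa [dist_eq_norm] using hx
    have hre : x.re ≤ z.re + r := by
      have := (le_abs_self _).trans (Complex.abs_re_le_norm (x - z))
      rw [Complex.sub_re] at this
      linarith
    have him : |x.im| ≤ |z.im| + r := by
      have := Complex.abs_im_le_norm (x - z)
      rw [Complex.sub_im] at this
      have := abs_sub_abs_le_abs_sub x.im z.im
      linarith
    rw [norm_mul]
    have : ‖(-2 * Complex.I : ℂ)‖ = 2 := by simp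
    rw [this]
    have hk := (KK_pos hb h0 h1 (z.re + r)).le
    have hkk : KK b ε x.re ≤ KK b ε (z.re + r) := by
      unfold KK; gcongr
    refine mul_le_mul_of_nonneg_left ((bound1 hb h0 h1 x t).trans ?_) (by norm_num)
    gcongr
  · exact ((integrable_exp_abs (by linarith)).const_mul _).const_mul _
  · refine Eventually.of_forall fun t x hx => ?_
    simp only [ebIntegrand]
    have hd : HasDerivAt (fun x : ℂ => -2 * Complex.I * x * ((t : ℂ) + Complex.I * (ε : ℂ)))
        (-2 * Complex.I * 1 * ((t : ℂ) + Complex.I * (ε : ℂ))) x :=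
      ((hasDerivAt_id x).const_mul _).mul_const _
    convert hd.cexp.div_const _ using 1
    · rfl
    · rw [← mul_div_assoc, ← mul_div_assoc]
      congr 1
      ring

/-- absolute convergence of the defining integral, independence of the
contour parameter `ε`, and holomorphy and nonvanishing of `e_b` on the strip
`|Im z| < (b+b⁻¹)/2`. -/
theorem statement0 (b : ℝ) (hb : 0 < b) :
    (∀ ε : ℝ, 0 < ε → ε < π * min b b⁻¹ → ∀ z : ℂ, |z.im| < (b + b⁻¹) / 2 →
      Integrable (ebIntegrand b ε z)) ∧
    (∀ ε ε' : ℝ, 0 < ε → ε < π * min b b⁻¹ → 0 < ε' → ε' < π * min b b⁻¹ →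
      ∀ z : ℂ, |z.im| < (b + b⁻¹) / 2 →
        ∫ t : ℝ, ebIntegrand b ε z t = ∫ t : ℝ, ebIntegrand b ε' z t) ∧
    DifferentiableOn ℂ (eb b) {z : ℂ | |z.im| < (b + b⁻¹) / 2} ∧
    (∀ z : ℂ, |z.im| < (b + b⁻¹) / 2 → eb b z ≠ 0) := by
  have hbi : 0 < b⁻¹ := inv_pos.2 hb
  have hm : 0 < min b b⁻¹ := lt_min hb hbi
  have hp : 0 < π * min b b⁻¹ := mul_pos Real.pi_pos hm
  refine ⟨fun ε h0 h1 z hz => integ_eb hb h0 h1 z hz,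
    fun ε ε' h0 h1 h0' h1' z hz => indep hb h0 h1 h0' h1' z hz, ?_, ?_⟩
  · intro z hz
    have := diff_eb hb (ε := π * min b b⁻¹ / 2) (by linarith) (by linarith) z hz
    exact ((this.const_mul (1 / 4 : ℂ)).cexp).differentiableWithinAt
  · intro z _
    exact Complex.exp_ne_zero _

end
end

section
/- Let b > 0 be real with b² irrational, and let e_b be the noncompact quantum dilogarithm on the strip |Im z| < (b+b⁻¹)/2. Then e_b extends uniquely to a meromorphic function on ℂ which satisfies the two shift equations e_b(z−ib/2) = (1+e^{2πbz})·e_b(z+ib/2) and e_b(z−ib⁻¹/2) = (1+e^{2πb⁻¹z})·e_b(z+ib⁻¹/2); the poles of this extension are exactly the points c_b + i(mb+nb⁻¹) with m,n ∈ ℤ≥0 and are all simple, and its zeros are exactly the points −c_b − i(mb+nb⁻¹) with m,n ∈ ℤ≥0 and are all simple. -/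
open MeasureTheory Complex Real Filter Topology

noncomputable section

/-- The set `{c_b + i(mb + nb⁻¹) : m, n ∈ ℤ≥0}` of poles of the continuation of `e_b`. -/
def ebPoles (b : ℝ) : Set ℂ :=
  {z | ∃ m n : ℕ, z = cb b + Complex.I * ((m : ℂ) * (b : ℂ) + (n : ℂ) * (b : ℂ)⁻¹)}

/-- The set `{-c_b - i(mb + nb⁻¹) : m, n ∈ ℤ≥0}` of zeros of the continuation of `e_b`. -/
def ebZeros (b : ℝ) : Set ℂ :=
  {z | ∃ m n : ℕ, z = -cb b - Complex.I * ((m : ℂ) * (b : ℂ) + (n : ℂ) * (b : ℂ)⁻¹)}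

lemma aux_integrable_exp_abs {c : ℝ} (hc : 0 < c) :
    Integrable (fun t : ℝ => Real.exp (-c * |t|)) := by
  rw [← integrableOn_univ, ← Set.Iic_union_Ioi (a := (0:ℝ))]
  refine IntegrableOn.union ?_ ?_
  · refine (integrableOn_exp_mul_Iic hc 0).congr_fun ?_ measurableSet_Iic
    intro t ht
    simp only [abs_of_nonpos (Set.mem_Iic.1 ht)]
    ring_nf
  · refine (integrableOn_exp_mul_Ioi (neg_lt_zero.2 hc) 0).congr_fun ?_ measurableSet_Ioi
    intro t ht
    simp only [abs_of_pos (Set.mem_Ioi.1 ht)]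

lemma aux_exp_abs_le_cosh (x : ℝ) : Real.exp |x| / 2 ≤ Real.cosh x := by
  rw [← Real.cosh_abs, Real.cosh_eq]
  have := Real.exp_pos (-|x|)
  linarith

lemma aux_norm_sinh (w : ℂ) : |Real.sin w.im| * (Real.exp |w.re| / 2) ≤ ‖Complex.sinh w‖ := by
  refine le_trans (mul_le_mul_of_nonneg_left (aux_exp_abs_le_cosh w.re) (abs_nonneg _)) ?_
  have h1 : Complex.sinh w = ((Real.sinh w.re * Real.cos w.im : ℝ) : ℂ)
      + ((Real.cosh w.re * Real.sin w.im : ℝ) : ℂ) * Complex.I := by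
    conv_lhs => rw [← Complex.re_add_im w]
    rw [Complex.sinh_add, Complex.cosh_mul_I, Complex.sinh_mul_I]
    push_cast
    ring
  have h2 : |(Complex.sinh w).im| ≤ ‖Complex.sinh w‖ := Complex.abs_im_le_norm _
  have h3 : (Complex.sinh w).im = Real.cosh w.re * Real.sin w.im := by
    rw [h1, Complex.add_im, Complex.ofReal_im, Complex.mul_I_im, Complex.ofReal_re, zero_add]
  rw [h3, abs_mul, abs_of_pos (Real.cosh_pos _), mul_comm] at h2
  exact h2

lemma aux_norm_exp (z : ℂ) (t ε : ℝ) :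
    ‖Complex.exp (-2 * Complex.I * z * ((t : ℂ) + Complex.I * (ε : ℂ)))‖
      = Real.exp (2 * (z.re * ε + z.im * t)) := by
  rw [Complex.norm_exp]
  congr 1
  simp
  ring

/-- Parametric integrals with exponential kernel. -/
lemma aux_param {k : ℝ → ℂ} (hk : Continuous k) {C q ε : ℝ} (hε : 0 ≤ ε)
    (hbd : ∀ t, ‖k t‖ ≤ C * Real.exp (-2 * q * |t|)) {z : ℂ} (hz : |z.im| < q) :
    Integrable (fun t : ℝ =>
      Complex.exp (-2 * Complex.I * z * ((t : ℂ) + Complex.I * (ε : ℂ))) * k t) ∧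
    HasDerivAt (fun z : ℂ => ∫ t : ℝ,
      Complex.exp (-2 * Complex.I * z * ((t : ℂ) + Complex.I * (ε : ℂ))) * k t)
      (∫ t : ℝ, (-2 * Complex.I * ((t : ℂ) + Complex.I * (ε : ℂ))) *
        Complex.exp (-2 * Complex.I * z * ((t : ℂ) + Complex.I * (ε : ℂ))) * k t) z := by
  have hC : 0 ≤ C := by
    have := (norm_nonneg _).trans (hbd 0)
    simpa using this
  set r : ℝ := (q - |z.im|) / 2 with hr
  have hr0 : 0 < r := by rw [hr]; linarith
  have key : ∀ x ∈ Metric.ball z r, ∀ t : ℝ,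
      ‖Complex.exp (-2 * Complex.I * x * ((t : ℂ) + Complex.I * (ε : ℂ))) * k t‖
        ≤ C * Real.exp (2 * (z.re + r) * ε) * Real.exp (-(2 * r) * |t|) := by
    intro x hx t
    have hx' : ‖x - z‖ < r := by simpa [dist_eq_norm] using hx
    have h1 : x.re ≤ z.re + r := by
      have := (Complex.abs_re_le_norm (x - z)).trans hx'.le
      have := (abs_le.1 this).2
      simp at this; linarith
    have h2 : |x.im| ≤ q - r := by
      have h3 := (Complex.abs_im_le_norm (x - z)).trans hx'.le
      have h4 : |x.im| ≤ |(x - z).im| + |z.im| := by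
        have := abs_add_le (x - z).im z.im
        simpa using this
      rw [hr] at *; linarith
    rw [norm_mul, aux_norm_exp]
    calc Real.exp (2 * (x.re * ε + x.im * t)) * ‖k t‖
        ≤ Real.exp (2 * ((z.re + r) * ε + (q - r) * |t|)) * (C * Real.exp (-2 * q * |t|)) := by
          refine mul_le_mul (Real.exp_le_exp.2 ?_) (hbd t) (norm_nonneg _) (Real.exp_pos _).le
          have h5 : x.im * t ≤ (q - r) * |t| := by
            refine (le_abs_self _).trans ?_
            rw [abs_mul]
            exact mul_le_mul_of_nonneg_right h2 (abs_nonneg _)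
          have h6 := mul_le_mul_of_nonneg_right h1 hε
          linarith
      _ = C * Real.exp (2 * (z.re + r) * ε) * Real.exp (-(2 * r) * |t|) := by
          rw [mul_left_comm, ← Real.exp_add, mul_assoc C, ← Real.exp_add]
          ring_nf
  have cont : ∀ x : ℂ, Continuous fun t : ℝ =>
      Complex.exp (-2 * Complex.I * x * ((t : ℂ) + Complex.I * (ε : ℂ))) * k t := by
    intro x; fun_prop
  have hInteg : Integrable (fun t : ℝ =>
      Complex.exp (-2 * Complex.I * z * ((t : ℂ) + Complex.I * (ε : ℂ))) * k t) := by
    refine ((aux_integrable_exp_abs (c := 2 * r) (by linarith)).const_mul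
      (C * Real.exp (2 * (z.re + r) * ε))).mono' (cont z).aestronglyMeasurable ?_
    exact Eventually.of_forall fun t => key z (Metric.mem_ball_self hr0) t
  refine ⟨hInteg, ?_⟩
  refine (hasDerivAt_integral_of_dominated_loc_of_deriv_le
    (F := fun (x : ℂ) (t : ℝ) =>
      Complex.exp (-2 * Complex.I * x * ((t : ℂ) + Complex.I * (ε : ℂ))) * k t)
    (F' := fun (x : ℂ) (t : ℝ) => (-2 * Complex.I * ((t : ℂ) + Complex.I * (ε : ℂ))) *
        Complex.exp (-2 * Complex.I * x * ((t : ℂ) + Complex.I * (ε : ℂ))) * k t)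
    (bound := fun t => 2 * (1 / r + ε) * (C * Real.exp (2 * (z.re + r) * ε)) *
      Real.exp (-r * |t|))
    (Metric.ball_mem_nhds z hr0) (Eventually.of_forall fun x => (cont x).aestronglyMeasurable)
    hInteg ?_ ?_ ?_ ?_).2
  · have : Continuous fun t : ℝ => (-2 * Complex.I * ((t : ℂ) + Complex.I * (ε : ℂ))) *
        Complex.exp (-2 * Complex.I * z * ((t : ℂ) + Complex.I * (ε : ℂ))) * k t := by
      fun_prop
    exact this.aestronglyMeasurable
  · refine Eventually.of_forall fun t x hx => ?_
    have h := key x hx t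
    have h1 : ‖(-2 * Complex.I * ((t : ℂ) + Complex.I * (ε : ℂ)))‖ ≤ 2 * (|t| + ε) := by
      rw [norm_mul, norm_mul, norm_neg, Complex.norm_I]
      have := norm_add_le (t : ℂ) (Complex.I * (ε : ℂ))
      rw [norm_mul, Complex.norm_I, Complex.norm_real, Complex.norm_real, Real.norm_eq_abs,
        Real.norm_eq_abs, abs_of_nonneg hε] at this
      simp only [Complex.norm_ofNat]
      linarith
    have h2 : |t| + ε ≤ (1 / r + ε) * Real.exp (r * |t|) := by
      have e1 : r * |t| ≤ Real.exp (r * |t|) := by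
        have := Real.add_one_le_exp (r * |t|); linarith
      have e2 : 1 ≤ Real.exp (r * |t|) := Real.one_le_exp (by positivity)
      have e3 : |t| ≤ 1 / r * Real.exp (r * |t|) := by
        rw [one_div, ← div_eq_inv_mul, le_div_iff₀ hr0]; linarith
      nlinarith
    rw [mul_assoc, norm_mul]
    calc _ ≤ (2 * ((1 / r + ε) * Real.exp (r * |t|))) *
          (C * Real.exp (2 * (z.re + r) * ε) * Real.exp (-(2 * r) * |t|)) := by
          refine mul_le_mul (h1.trans (by linarith)) h (norm_nonneg _) (by positivity)
      _ = _ := by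
          have : Real.exp (-r * |t|) = Real.exp (r * |t|) * Real.exp (-(2 * r) * |t|) := by
            rw [← Real.exp_add]; ring_nf
          rw [this]; ring
  · exact (aux_integrable_exp_abs hr0).const_mul _
  · refine Eventually.of_forall fun t x _ => ?_
    have : HasDerivAt (fun x : ℂ => -2 * Complex.I * x * ((t : ℂ) + Complex.I * (ε : ℂ)))
        (-2 * Complex.I * ((t : ℂ) + Complex.I * (ε : ℂ))) x := by
      have := ((hasDerivAt_id x).const_mul (-2 * Complex.I)).mul_const
        ((t : ℂ) + Complex.I * (ε : ℂ))
      simpa using this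
    have := this.cexp.mul_const (k t)
    exact this.congr_deriv (by ring)

/-- Moving a horizontal contour. -/
lemma aux_contour {G : ℂ → ℂ} {α β C c : ℝ} (hc : 0 < c)
    (hd : ∀ w : ℂ, w.im ∈ Set.uIcc α β → DifferentiableAt ℂ G w)
    (hbd : ∀ w : ℂ, w.im ∈ Set.uIcc α β → ‖G w‖ ≤ C * Real.exp (-c * |w.re|)) :
    ∫ t : ℝ, G (t + α * Complex.I) = ∫ t : ℝ, G (t + β * Complex.I) := by
  have hInteg : ∀ y ∈ Set.uIcc α β, Integrable fun t : ℝ => G (t + y * Complex.I) := by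
    intro y hy
    have hcont : Continuous fun t : ℝ => G (t + y * Complex.I) := by
      refine continuous_iff_continuousAt.2 fun t => ?_
      have : ContinuousAt G (t + y * Complex.I) := (hd _ (by simpa using hy)).continuousAt
      exact ContinuousAt.comp (f := fun t : ℝ => (t + y * Complex.I : ℂ)) this (by fun_prop)
    refine ((aux_integrable_exp_abs hc).const_mul C).mono' hcont.aestronglyMeasurable
      (Eventually.of_forall fun t => ?_)
    simpa using hbd (t + y * Complex.I) (by simpa using hy)
  have hlim : ∀ y ∈ Set.uIcc α β, Tendsto (fun T : ℝ => ∫ t in (-T)..T, G (t + y * Complex.I))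
      atTop (𝓝 (∫ t : ℝ, G (t + y * Complex.I))) := fun y hy =>
    intervalIntegral_tendsto_integral (hInteg y hy) tendsto_neg_atTop_atBot tendsto_id
  have hvert : ∀ s : ℝ, s = 1 ∨ s = -1 → Tendsto (fun T : ℝ => Complex.I •
      ∫ y in α..β, G (((s * T : ℝ) : ℂ) + y * Complex.I)) atTop (𝓝 0) := by
    intro s hs
    have hs' : |s| = 1 := by rcases hs with rfl | rfl <;> simp
    have h0 : Tendsto (fun T : ℝ => C * Real.exp (-c * T) * |β - α|) atTop (𝓝 0) := by
      have h1 : Tendsto (fun T : ℝ => -c * T) atTop atBot :=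
        tendsto_id.const_mul_atTop_of_neg (neg_lt_zero.2 hc)
      have := ((Real.tendsto_exp_atBot.comp h1).const_mul C).mul_const |β - α|
      simpa using this
    refine squeeze_zero_norm' ?_ h0
    filter_upwards [eventually_ge_atTop 0] with T hT
    rw [norm_smul, Complex.norm_I, one_mul]
    refine intervalIntegral.norm_integral_le_of_norm_le_const fun y hy => ?_
    have := hbd (((s * T : ℝ) : ℂ) + y * Complex.I)
      (by simpa using Set.uIoc_subset_uIcc hy)
    refine this.trans (le_of_eq ?_)
    have h2 : (((s * T : ℝ) : ℂ) + y * Complex.I).re = s * T := by simp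
    rw [h2, abs_mul, hs', one_mul, abs_of_nonneg hT]
  have hrect : ∀ T : ℝ, (∫ t in (-T)..T, G (t + α * Complex.I)) -
      (∫ t in (-T)..T, G (t + β * Complex.I)) +
      Complex.I • (∫ y in α..β, G (((1 * T : ℝ) : ℂ) + y * Complex.I)) -
      Complex.I • (∫ y in α..β, G (((-1 * T : ℝ) : ℂ) + y * Complex.I)) = 0 := by
    intro T
    have := Complex.integral_boundary_rect_eq_zero_of_differentiableOn G
      (((-T : ℝ) : ℂ) + α * Complex.I) ((T : ℂ) + β * Complex.I) ?_
    · simpa using this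
    · intro w hw
      refine (hd w ?_).differentiableWithinAt
      have := hw.2
      simpa using this
  have hl := (((hlim α Set.left_mem_uIcc).sub (hlim β Set.right_mem_uIcc)).add
    (hvert 1 (Or.inl rfl))).sub (hvert (-1) (Or.inr rfl))
  simp only [hrect] at hl
  have := tendsto_nhds_unique hl tendsto_const_nhds
  simp only [add_zero, sub_zero] at this
  exact sub_eq_zero.1 this

lemma aux_beta {u : ℂ} (h0 : 0 < u.re) (h1 : u.re < 1) :
    ∫ t : ℝ, Complex.exp (u * t) / (1 + Complex.exp t) = π / Complex.sin (π * u) := by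
  rw [← Complex.Gamma_mul_Gamma_one_sub, Complex.Gamma_mul_Gamma_eq_betaIntegral h0 (by simpa using h1)]
  rw [add_sub_cancel, Complex.Gamma_one, one_mul, Complex.betaIntegral,
    intervalIntegral.integral_of_le zero_le_one, integral_Ioc_eq_integral_Ioo,
    ← Real.range_sigmoid, ← Set.image_univ, integral_image_eq_integral_abs_deriv_smul
      MeasurableSet.univ (fun x _ => (Real.hasDerivAt_sigmoid x).hasDerivWithinAt)
      Real.sigmoid_injective.injOn, setIntegral_univ]
  congr 1
  ext t
  have hs := Real.sigmoid_pos t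
  have hs1 := Real.sigmoid_lt_one t
  have hs1' : 0 < 1 - Real.sigmoid t := by linarith
  have hsc : ((Real.sigmoid t : ℝ) : ℂ) ≠ 0 := by exact_mod_cast hs.ne'
  have hsc1 : (1 - (Real.sigmoid t : ℝ) : ℂ) ≠ 0 := by exact_mod_cast hs1'.ne'
  have he : Real.exp t = Real.sigmoid t / (1 - Real.sigmoid t) := by
    have := Real.sigmoid_mul_rexp_neg t
    rw [Real.sigmoid_neg] at this
    rw [← this, Real.exp_neg]
    field_simp
  have hec : Complex.exp t = (Real.sigmoid t : ℂ) / (1 - (Real.sigmoid t : ℂ)) := by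
    rw [← Complex.ofReal_exp, he]; push_cast; rfl
  have hlog : t = Real.log (Real.sigmoid t) - Real.log (1 - Real.sigmoid t) := by
    rw [← Real.log_div hs.ne' hs1'.ne', ← he, Real.log_exp]
  rw [abs_of_pos (mul_pos hs hs1'), hec, Complex.real_smul, Complex.cpow_sub _ _ hsc,
    Complex.cpow_one]
  have e2 : (1 - (Real.sigmoid t : ℂ)) ^ (1 - u - 1) = ((1 - (Real.sigmoid t : ℂ)) ^ u)⁻¹ := by
    rw [← Complex.cpow_neg]; congr 1; ring
  have e3 : Complex.exp (u * t) = (Real.sigmoid t : ℂ) ^ u * ((1 - (Real.sigmoid t : ℂ)) ^ u)⁻¹ := by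
    rw [← Complex.cpow_neg, Complex.cpow_def_of_ne_zero hsc, Complex.cpow_def_of_ne_zero hsc1,
      ← Complex.exp_add]
    have e4 : Complex.log (1 - (Real.sigmoid t : ℂ)) = (Real.log (1 - Real.sigmoid t) : ℝ) := by
      rw [Complex.ofReal_log hs1'.le]; push_cast; rfl
    rw [← Complex.ofReal_log hs.le, e4]
    conv_lhs => rw [hlog]
    congr 1
    push_cast
    ring
  rw [e2, e3]
  push_cast
  have hne : (1 - (Real.sigmoid t : ℂ)) ^ u ≠ 0 := by
    simp [Complex.cpow_eq_zero_iff, hsc1]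
  have h5 : (1 + (Real.sigmoid t : ℂ) / (1 - (Real.sigmoid t : ℂ))) = (1 - (Real.sigmoid t : ℂ))⁻¹ := by
    field_simp
    ring
  rw [h5]
  field_simp

/-- The factor `1 + e^{2πbz}`. -/
def phi (b : ℝ) (z : ℂ) : ℂ := 1 + Complex.exp (2 * (π : ℂ) * (b : ℂ) * z)

lemma phi_eq_zero_iff {b : ℝ} (hb : 0 < b) (z : ℂ) :
    phi b z = 0 ↔ ∃ j : ℤ, z = Complex.I * (((j : ℂ) + 1 / 2) * (b : ℂ)⁻¹) := by
  have hbc : (b : ℂ) ≠ 0 := by exact_mod_cast hb.ne'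
  have hpi : (π : ℂ) ≠ 0 := by exact_mod_cast Real.pi_ne_zero
  have h1 : phi b z = 0 ↔ Complex.exp (2 * (π : ℂ) * (b : ℂ) * z) = Complex.exp (π * Complex.I) := by
    rw [phi, Complex.exp_pi_mul_I, add_comm, add_eq_zero_iff_eq_neg]
  rw [h1, Complex.exp_eq_exp_iff_exists_int]
  refine exists_congr fun j => ?_
  constructor
  · intro h
    have : z = (π * Complex.I + j * (2 * π * Complex.I)) / (2 * π * b) := by
      rw [← h]; field_simp
    rw [this]; field_simp; ring
  · rintro rfl
    field_simp; ring

lemma aux_sech {b : ℝ} (hb : 0 < b) {z : ℂ} (hz : |z.im| < b⁻¹ / 2) :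
    ∫ t : ℝ, Complex.exp (-2 * Complex.I * z * t) / Complex.cosh ((b : ℂ)⁻¹ * t)
      = π * b / Complex.cosh (π * b * z) := by
  have hbc : (b : ℂ) ≠ 0 := by exact_mod_cast hb.ne'
  set u : ℂ := 1 / 2 - Complex.I * z * b with hu
  have hure : u.re = 1 / 2 + z.im * b := by simp [hu]
  have hz' : |z.im * b| < 1 / 2 := by
    rw [abs_mul, abs_of_pos hb]
    calc |z.im| * b < b⁻¹ / 2 * b := mul_lt_mul_of_pos_right hz hb
      _ = 1 / 2 := by field_simp
  have hz2 := abs_lt.1 hz'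
  have h := aux_beta (u := u) (by rw [hure]; linarith) (by rw [hure]; linarith)
  have h2 := Measure.integral_comp_mul_left
    (fun t : ℝ => Complex.exp (u * t) / (1 + Complex.exp t)) (2 * b⁻¹)
  rw [h] at h2
  have h3 : ∀ t : ℝ, Complex.exp (u * ((2 * b⁻¹ * t : ℝ) : ℂ)) /
      (1 + Complex.exp ((2 * b⁻¹ * t : ℝ) : ℂ)) =
      (1 / 2) * (Complex.exp (-2 * Complex.I * z * t) / Complex.cosh ((b : ℂ)⁻¹ * t)) := by
    intro t
    have e1 : Complex.exp (u * ((2 * b⁻¹ * t : ℝ) : ℂ)) =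
        Complex.exp (-2 * Complex.I * z * t) * Complex.exp ((b : ℂ)⁻¹ * t) := by
      rw [← Complex.exp_add, hu]; congr 1; push_cast; field_simp; ring
    have e2 : (1 + Complex.exp ((2 * b⁻¹ * t : ℝ) : ℂ)) =
        2 * Complex.cosh ((b : ℂ)⁻¹ * t) * Complex.exp ((b : ℂ)⁻¹ * t) := by
      rw [Complex.two_cosh, add_mul, ← Complex.exp_add, ← Complex.exp_add, add_comm]
      congr 1
      · congr 1; push_cast; ring
      · simp
    rw [e1, e2, mul_div_mul_right _ _ (Complex.exp_ne_zero _)]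
    field_simp
  simp only [h3] at h2
  rw [integral_const_mul, abs_of_pos (by positivity)] at h2
  have h4 : Complex.sin (π * u) = Complex.cosh (π * b * z) := by
    have : (π : ℂ) * u = π / 2 - (π * b * z) * Complex.I := by rw [hu]; ring
    rw [this, Complex.sin_pi_div_two_sub, Complex.cos_mul_I]
  rw [h4, Complex.real_smul] at h2
  have h5 : ∀ x : ℂ, 1 / 2 * x = (((2 * b⁻¹)⁻¹ : ℝ) : ℂ) * (π / Complex.cosh (π * b * z)) →
      x = π * b / Complex.cosh (π * b * z) := by
    intro x hx
    have : x = 2 * (1 / 2 * x) := by ring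
    rw [this, hx]; push_cast
    rw [mul_inv, inv_inv]; ring
  exact h5 _ h2

lemma aux_cosh_ne {b : ℝ} (z : ℂ) (h : phi b z ≠ 0) :
    π * b / Complex.cosh (π * b * z) * Complex.exp (π * b * z) =
      2 * π * b * Complex.exp (2 * (π : ℂ) * (b : ℂ) * z) / phi b z := by
  have e2 : phi b z = 2 * Complex.cosh (π * b * z) * Complex.exp (π * b * z) := by
    rw [phi, Complex.two_cosh, add_mul, ← Complex.exp_add, ← Complex.exp_add, add_comm]
    congr 1
    · congr 1; ring
    · simp
  have e3 : Complex.exp (2 * (π : ℂ) * (b : ℂ) * z) =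
    Complex.exp (π * b * z) * Complex.exp (π * b * z) := by
    rw [← Complex.exp_add]; congr 1; ring
  have hc : Complex.cosh (π * b * z) ≠ 0 := by
    intro hc; rw [e2, hc] at h; simp at h
  have he := Complex.exp_ne_zero (π * b * z)
  rw [e2, e3]
  field_simp

lemma phi_ne_zero_of_strip {b : ℝ} (hb : 0 < b) {z : ℂ} (hz : |z.im| < b⁻¹ / 2) :
    phi b z ≠ 0 := by
  rw [Ne, phi_eq_zero_iff hb]
  rintro ⟨j, rfl⟩
  have hb' : 0 < b⁻¹ := inv_pos.2 hb
  have : (Complex.I * (((j : ℂ) + 1 / 2) * (b : ℂ)⁻¹)).im = (j + 1 / 2) * b⁻¹ := by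
    rw [Complex.I_mul_im]
    have : (((j : ℂ) + 1 / 2) * (b : ℂ)⁻¹) = (((j + 1 / 2) * b⁻¹ : ℝ) : ℂ) := by push_cast; rfl
    rw [this, Complex.ofReal_re]
  rw [this, abs_mul, abs_of_pos hb', div_eq_mul_one_div, mul_comm] at hz
  have h1 := lt_of_mul_lt_mul_left hz hb'.le
  have h2 := abs_lt.1 h1
  have h3 : (j : ℝ) < 0 := by linarith
  have h4 : (-1 : ℝ) < j := by linarith
  have h3' : j < 0 := by exact_mod_cast h3
  have h4' : -1 < j := by exact_mod_cast h4
  omega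

lemma aux_sinh_ne {w : ℂ} (h : 0 < Real.sin w.im) : Complex.sinh w ≠ 0 := by
  have := aux_norm_sinh w
  have h2 : 0 < |Real.sin w.im| * (Real.exp |w.re| / 2) := by positivity
  exact norm_pos_iff.1 (h2.trans_le this)

lemma aux_J {b ε : ℝ} (hb : 0 < b) (hε : 0 < ε) (hε2 : b⁻¹ * ε < π) {z : ℂ}
    (hz : |z.im| < b⁻¹ / 2) :
    ∫ t : ℝ, Complex.exp (-2 * Complex.I * z * ((t : ℂ) + Complex.I * (ε : ℂ))) /
      Complex.sinh ((b : ℂ)⁻¹ * ((t : ℂ) + Complex.I * (ε : ℂ))) =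
      -Complex.I * (2 * π * b * Complex.exp (2 * (π : ℂ) * (b : ℂ) * z) / phi b z) := by
  have hb' : 0 < b⁻¹ := inv_pos.2 hb
  have hbc : (b : ℂ) ≠ 0 := by exact_mod_cast hb.ne'
  set β : ℝ := π * b / 2 with hβ
  have hβ0 : 0 < β := by positivity
  have hβ1 : b⁻¹ * β = π / 2 := by rw [hβ]; field_simp
  have hsin : ∀ y ∈ Set.uIcc ε β, 0 < Real.sin (b⁻¹ * y) := by
    intro y hy
    have h1 : min ε β ≤ y := hy.1
    have h2 : y ≤ max ε β := hy.2
    apply Real.sin_pos_of_pos_of_lt_pi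
    · have : 0 < y := lt_of_lt_of_le (lt_min hε hβ0) h1
      positivity
    · rcases le_max_iff.1 h2 with h | h
      · exact (mul_le_mul_of_nonneg_left h hb'.le).trans_lt hε2
      · refine (mul_le_mul_of_nonneg_left h hb'.le).trans_lt ?_
        rw [hβ1]; linarith [Real.pi_pos]
  obtain ⟨y0, hy0, hmin⟩ := isCompact_uIcc.exists_isMinOn (Set.nonempty_uIcc (a := ε) (b := β))
    (f := fun y => Real.sin (b⁻¹ * y)) (by fun_prop)
  set m := Real.sin (b⁻¹ * y0) with hm
  have hm0 : 0 < m := hsin y0 hy0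
  have him : ∀ w : ℂ, ((b : ℂ)⁻¹ * w).im = b⁻¹ * w.im := by
    intro w; rw [← Complex.ofReal_inv, Complex.im_ofReal_mul]
  have hre : ∀ w : ℂ, ((b : ℂ)⁻¹ * w).re = b⁻¹ * w.re := by
    intro w; rw [← Complex.ofReal_inv, Complex.re_ofReal_mul]
  have key := aux_contour (G := fun w => Complex.exp (-2 * Complex.I * z * w) /
      Complex.sinh ((b : ℂ)⁻¹ * w)) (α := ε) (β := β) (c := b⁻¹ - 2 * |z.im|)
      (C := Real.exp (2 * (|z.re| * max ε β)) * (2 / m)) (by linarith) ?_ ?_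
  · calc _ = ∫ t : ℝ, Complex.exp (-2 * Complex.I * z * ((t : ℂ) + ε * Complex.I)) /
        Complex.sinh ((b : ℂ)⁻¹ * ((t : ℂ) + ε * Complex.I)) := by
          simp only [mul_comm Complex.I (ε : ℂ)]
      _ = _ := key
      _ = ∫ t : ℝ, (Complex.exp (π * b * z) * (-Complex.I)) *
          (Complex.exp (-2 * Complex.I * z * t) / Complex.cosh ((b : ℂ)⁻¹ * t)) := by
          congr 1
          ext t
          have e1 : (b : ℂ)⁻¹ * ((t : ℂ) + β * Complex.I) = (b : ℂ)⁻¹ * t + π / 2 * Complex.I := by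
            rw [hβ]; push_cast; field_simp
          have e2 : -2 * Complex.I * z * ((t : ℂ) + β * Complex.I) =
              π * b * z + -2 * Complex.I * z * t := by
            rw [hβ]; push_cast; ring_nf; rw [Complex.I_sq]; ring
          rw [e1, e2, Complex.sinh_add, Complex.cosh_mul_I, Complex.sinh_mul_I,
            Complex.cos_pi_div_two, Complex.sin_pi_div_two, Complex.exp_add, mul_zero, zero_add,
            one_mul, ← div_div]
          rw [Complex.div_I]
          ring
      _ = _ := by
          rw [integral_const_mul, aux_sech hb hz, ← aux_cosh_ne z (phi_ne_zero_of_strip hb hz)]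
          ring
  · intro w hw
    refine DifferentiableAt.div (by fun_prop) (by fun_prop) (aux_sinh_ne ?_)
    rw [him]; exact hsin _ hw
  · intro w hw
    have h1 := aux_norm_sinh ((b : ℂ)⁻¹ * w)
    rw [him, hre, abs_of_pos (hsin _ hw), abs_mul, abs_of_pos hb'] at h1
    have h2 : m * (Real.exp (b⁻¹ * |w.re|) / 2) ≤ ‖Complex.sinh ((b : ℂ)⁻¹ * w)‖ :=
      le_trans (mul_le_mul_of_nonneg_right (hmin hw) (by positivity)) h1
    have h3 : ‖Complex.exp (-2 * Complex.I * z * w)‖ = Real.exp (2 * (z.re * w.im + z.im * w.re)) := by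
      have := aux_norm_exp z w.re w.im
      rw [mul_comm Complex.I (w.im : ℂ), Complex.re_add_im] at this
      exact this
    rw [norm_div, h3, div_le_iff₀ (lt_of_lt_of_le (by positivity) h2)]
    refine le_trans ?_ (mul_le_mul_of_nonneg_left h2 (by positivity))
    have h4 : Real.exp (2 * (|z.re| * max ε β)) * (2 / m) *
        Real.exp (-(b⁻¹ - 2 * |z.im|) * |w.re|) * (m * (Real.exp (b⁻¹ * |w.re|) / 2)) =
        Real.exp (2 * (|z.re| * max ε β) + 2 * (|z.im| * |w.re|)) := by
      have : Real.exp (2 * (|z.re| * max ε β) + 2 * (|z.im| * |w.re|)) =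
        Real.exp (2 * (|z.re| * max ε β)) * (Real.exp (-(b⁻¹ - 2 * |z.im|) * |w.re|) *
          Real.exp (b⁻¹ * |w.re|)) := by
        rw [← Real.exp_add, ← Real.exp_add]; congr 1; ring
      rw [this]
      field_simp
    rw [h4]
    apply Real.exp_le_exp.2
    have h5 : z.re * w.im ≤ |z.re| * max ε β := by
      have a1 : 0 < w.im := lt_of_lt_of_le (lt_min hε hβ0) hw.1
      exact mul_le_mul (le_abs_self _) hw.2 a1.le (abs_nonneg _)
    have h6 : z.im * w.re ≤ |z.im| * |w.re| := by
      rw [← abs_mul]; exact le_abs_self _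
    linarith

lemma aux_line_ne {ε : ℝ} (hε : 0 < ε) (t : ℝ) : ((t : ℂ) + Complex.I * (ε : ℂ)) ≠ 0 := by
  intro h
  have := congrArg Complex.im h
  simp at this
  exact hε.ne' this

lemma aux_line_norm {ε : ℝ} (hε : 0 < ε) (t : ℝ) : ε ≤ ‖((t : ℂ) + Complex.I * (ε : ℂ))‖ := by
  have := Complex.abs_im_le_norm ((t : ℂ) + Complex.I * (ε : ℂ))
  simpa [abs_of_pos hε] using this

lemma aux_line_re (a ε t : ℝ) : ((a : ℂ) * ((t : ℂ) + Complex.I * (ε : ℂ))).re = a * t := by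
  simp

lemma aux_line_im (a ε t : ℝ) : ((a : ℂ) * ((t : ℂ) + Complex.I * (ε : ℂ))).im = a * ε := by
  simp

lemma aux_sinh_line {a ε : ℝ} (ha : 0 < a) (hs : 0 < Real.sin (a * ε)) (t : ℝ) :
    Real.sin (a * ε) / 2 * Real.exp (a * |t|) ≤
      ‖Complex.sinh ((a : ℂ) * ((t : ℂ) + Complex.I * (ε : ℂ)))‖ := by
  have := aux_norm_sinh ((a : ℂ) * ((t : ℂ) + Complex.I * (ε : ℂ)))
  rw [aux_line_re, aux_line_im, abs_of_pos hs, abs_mul, abs_of_pos ha] at this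
  refine le_trans (le_of_eq ?_) this
  ring

lemma aux_sinh_line_ne {a ε : ℝ} (hs : 0 < Real.sin (a * ε)) (t : ℝ) :
    Complex.sinh ((a : ℂ) * ((t : ℂ) + Complex.I * (ε : ℂ))) ≠ 0 := by
  apply aux_sinh_ne
  rwa [aux_line_im]

/-- kernel with one sinh -/
def kerOne (b ε : ℝ) (t : ℝ) : ℂ :=
  (((t : ℂ) + Complex.I * (ε : ℂ)) *
    Complex.sinh (((b⁻¹ : ℝ) : ℂ) * ((t : ℂ) + Complex.I * (ε : ℂ))))⁻¹

/-- kernel with two sinh -/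
def kerTwo (b ε : ℝ) (t : ℝ) : ℂ :=
  (((t : ℂ) + Complex.I * (ε : ℂ)) *
    Complex.sinh ((b : ℂ) * ((t : ℂ) + Complex.I * (ε : ℂ))) *
    Complex.sinh (((b⁻¹ : ℝ) : ℂ) * ((t : ℂ) + Complex.I * (ε : ℂ))))⁻¹

lemma kerOne_cont {b ε : ℝ} (hε : 0 < ε) (hs : 0 < Real.sin (b⁻¹ * ε)) :
    Continuous (kerOne b ε) := by
  unfold kerOne
  refine Continuous.inv₀ (by fun_prop) fun t => ?_
  exact mul_ne_zero (aux_line_ne hε t) (aux_sinh_line_ne hs t)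

lemma kerTwo_cont {b ε : ℝ} (hε : 0 < ε) (hs : 0 < Real.sin (b⁻¹ * ε))
    (hs' : 0 < Real.sin (b * ε)) :
    Continuous (kerTwo b ε) := by
  unfold kerTwo
  refine Continuous.inv₀ (by fun_prop) fun t => ?_
  exact mul_ne_zero (mul_ne_zero (aux_line_ne hε t) (aux_sinh_line_ne hs' t))
    (aux_sinh_line_ne hs t)

lemma kerOne_bd {b ε : ℝ} (hb : 0 < b) (hε : 0 < ε) (hs : 0 < Real.sin (b⁻¹ * ε)) (t : ℝ) :
    ‖kerOne b ε t‖ ≤ (ε * (Real.sin (b⁻¹ * ε) / 2))⁻¹ * Real.exp (-2 * (b⁻¹ / 2) * |t|) := by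
  have hb' : 0 < b⁻¹ := inv_pos.2 hb
  have h1 := aux_sinh_line hb' hs t
  have h2 := aux_line_norm hε t
  unfold kerOne
  have e : Real.exp (-2 * (b⁻¹ / 2) * |t|) = (Real.exp (b⁻¹ * |t|))⁻¹ := by
    rw [← Real.exp_neg]; congr 1; ring
  rw [norm_inv, norm_mul, e, ← mul_inv]
  apply inv_anti₀ (by positivity)
  rw [mul_assoc]
  exact mul_le_mul h2 h1 (by positivity) (norm_nonneg _)

lemma kerTwo_bd {b ε : ℝ} (hb : 0 < b) (hε : 0 < ε) (hs : 0 < Real.sin (b⁻¹ * ε))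
    (hs' : 0 < Real.sin (b * ε)) (t : ℝ) :
    ‖kerTwo b ε t‖ ≤ (ε * (Real.sin (b * ε) / 2) * (Real.sin (b⁻¹ * ε) / 2))⁻¹ *
      Real.exp (-2 * ((b + b⁻¹) / 2) * |t|) := by
  have hb' : 0 < b⁻¹ := inv_pos.2 hb
  have h1 := aux_sinh_line hb' hs t
  have h1' := aux_sinh_line hb hs' t
  have h2 := aux_line_norm hε t
  unfold kerTwo
  have e : Real.exp (-2 * ((b + b⁻¹) / 2) * |t|) =
      (Real.exp (b * |t|) * Real.exp (b⁻¹ * |t|))⁻¹ := by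
    rw [← Real.exp_add, ← Real.exp_neg]; congr 1; ring
  rw [norm_inv, norm_mul, norm_mul, e, ← mul_inv]
  apply inv_anti₀ (by positivity)
  calc _ = ε * (Real.sin (b * ε) / 2 * Real.exp (b * |t|)) *
        (Real.sin (b⁻¹ * ε) / 2 * Real.exp (b⁻¹ * |t|)) := by ring
    _ ≤ _ := mul_le_mul (mul_le_mul h2 h1' (by positivity) (norm_nonneg _)) h1 (by positivity)
        (by positivity)

/-- The auxiliary integral. -/
def auxL (b ε : ℝ) (z : ℂ) : ℂ := ∫ t : ℝ,
      Complex.exp (-2 * Complex.I * z * ((t : ℂ) + Complex.I * (ε : ℂ))) * kerOne b ε t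

lemma auxL_deriv {b ε : ℝ} (hb : 0 < b) (hε : 0 < ε) (hε2 : b⁻¹ * ε < π) {z : ℂ}
    (hz : |z.im| < b⁻¹ / 2) :
    HasDerivAt (auxL b ε)
      (-2 * (2 * π * b * Complex.exp (2 * (π : ℂ) * (b : ℂ) * z) / phi b z)) z := by
  have hb' : 0 < b⁻¹ := inv_pos.2 hb
  have hs : 0 < Real.sin (b⁻¹ * ε) := Real.sin_pos_of_pos_of_lt_pi (by positivity) hε2
  have h := (aux_param (kerOne_cont hε hs) hε.le (kerOne_bd hb hε hs) hz).2
  refine HasDerivAt.congr_deriv h ?_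
  have e : ∀ t : ℝ, (-2 * Complex.I * ((t : ℂ) + Complex.I * (ε : ℂ))) *
        Complex.exp (-2 * Complex.I * z * ((t : ℂ) + Complex.I * (ε : ℂ))) * kerOne b ε t =
        (-2 * Complex.I) * (Complex.exp (-2 * Complex.I * z * ((t : ℂ) + Complex.I * (ε : ℂ))) /
      Complex.sinh ((b : ℂ)⁻¹ * ((t : ℂ) + Complex.I * (ε : ℂ)))) := by
    intro t
    have h1 := aux_line_ne hε t
    unfold kerOne
    rw [Complex.ofReal_inv, mul_inv]
    field_simp
  simp only [e]
  rw [integral_const_mul, aux_J hb hε hε2 hz]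
  linear_combination (2 * (2 * π * b * Complex.exp (2 * (π : ℂ) * (b : ℂ) * z) / phi b z)) *
    Complex.I_sq

lemma phi_hasDerivAt (b : ℝ) (z : ℂ) :
    HasDerivAt (phi b) (2 * π * b * Complex.exp (2 * (π : ℂ) * (b : ℂ) * z)) z := by
  have h : HasDerivAt (fun z : ℂ => 2 * (π : ℂ) * (b : ℂ) * z) (2 * (π : ℂ) * (b : ℂ)) z := by
    simpa using (hasDerivAt_id z).const_mul (2 * (π : ℂ) * (b : ℂ))
  have := h.cexp.const_add 1
  exact this.congr_deriv (by ring)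

lemma auxL_eq {b ε : ℝ} (hb : 0 < b) (hε : 0 < ε) (hε2 : b⁻¹ * ε < π) {z : ℂ}
    (hz : |z.im| < b⁻¹ / 2) :
    Complex.exp (-(1 / 2) * auxL b ε z) = phi b z := by
  have hb' : 0 < b⁻¹ := inv_pos.2 hb
  have hs : 0 < Real.sin (b⁻¹ * ε) := Real.sin_pos_of_pos_of_lt_pi (by positivity) hε2
  set H : ℂ → ℂ := fun z => Complex.exp (-(1 / 2) * auxL b ε z) / phi b z with hH
  set S : Set ℂ := {z | |z.im| < b⁻¹ / 2} with hS
  have hSo : IsOpen S := isOpen_lt (by fun_prop) continuous_const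
  have hSc : Convex ℝ S := by
    have : S = Complex.imLm ⁻¹' (Set.Ioo (-(b⁻¹ / 2)) (b⁻¹ / 2)) := by
      ext w; simp [hS, abs_lt]
    rw [this]
    exact (convex_Ioo _ _).linear_preimage _
  have hder : ∀ w ∈ S, HasDerivAt H 0 w := by
    intro w hw
    have h1 := ((auxL_deriv hb hε hε2 hw).const_mul (-(1 / 2 : ℂ))).cexp
    have hne := phi_ne_zero_of_strip hb hw
    have h2 := h1.div (phi_hasDerivAt b w) hne
    refine HasDerivAt.congr_deriv h2 ?_
    field_simp
    ring
  have hconst : ∀ x ∈ S, ∀ y ∈ S, H x = H y := by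
    intro x hx y hy
    refine hSo.is_const_of_deriv_eq_zero hSc.isPreconnected
      (fun w hw => (hder w hw).differentiableAt.differentiableWithinAt)
      (fun w hw => (hder w hw).deriv) hx hy
  have hreal : ∀ x : ℝ, (x : ℂ) ∈ S := by
    intro x; simp [hS, hb]
  have hL0 : Tendsto (fun x : ℝ => auxL b ε (x : ℂ)) atBot (𝓝 0) := by
    have hexp : Tendsto (fun x : ℝ => Real.exp (2 * ε * x) * ∫ t : ℝ, ‖kerOne b ε t‖) atBot (𝓝 0) := by
      have h1 : Tendsto (fun x : ℝ => 2 * ε * x) atBot atBot :=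
        tendsto_id.const_mul_atBot (by positivity)
      have := (Real.tendsto_exp_atBot.comp h1).mul_const (∫ t : ℝ, ‖kerOne b ε t‖)
      simpa using this
    refine squeeze_zero_norm (fun x => ?_) hexp
    refine (norm_integral_le_integral_norm _).trans (le_of_eq ?_)
    rw [← integral_const_mul]
    congr 1
    ext t
    rw [norm_mul, aux_norm_exp]
    congr 2
    simp; ring
  have hp0 : Tendsto (fun x : ℝ => phi b (x : ℂ)) atBot (𝓝 1) := by
    have h1 : Tendsto (fun x : ℝ => 2 * π * b * x) atBot atBot :=
        tendsto_id.const_mul_atBot (by positivity)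
    have h2 := (Complex.continuous_ofReal.tendsto 0).comp (Real.tendsto_exp_atBot.comp h1)
    have h3 := h2.const_add (1 : ℂ)
    simpa [phi, Function.comp_def] using h3
  have hH1 : Tendsto (fun x : ℝ => H (x : ℂ)) atBot (𝓝 1) := by
    have h1 : Tendsto (fun x : ℝ => Complex.exp (-(1 / 2) * auxL b ε (x : ℂ))) atBot (𝓝 1) := by
      have := (Complex.continuous_exp.tendsto _).comp (hL0.const_mul (-(1 / 2 : ℂ)))
      simpa [Function.comp_def] using this
    have := h1.div hp0 one_ne_zero
    rw [div_one] at this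
    exact this
  have hHz : H z = 1 := by
    refine tendsto_nhds_unique ?_ hH1
    have : (fun x : ℝ => H (x : ℂ)) = fun _ => H z := by
      ext x; exact hconst _ (hreal x) _ hz
    rw [this]; exact tendsto_const_nhds
  rw [hH] at hHz
  exact (div_eq_one_iff_eq (phi_ne_zero_of_strip hb hz)).1 hHz

lemma aux_eps {b : ℝ} (hb : 0 < b) : 0 < π * min b b⁻¹ / 2 ∧ b * (π * min b b⁻¹ / 2) < π ∧
    b⁻¹ * (π * min b b⁻¹ / 2) < π := by
  have hb' : 0 < b⁻¹ := inv_pos.2 hb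
  have hpi := Real.pi_pos
  have hm : 0 < min b b⁻¹ := lt_min hb hb'
  have h1 : b * min b b⁻¹ ≤ 1 := by
    calc b * min b b⁻¹ ≤ b * b⁻¹ := mul_le_mul_of_nonneg_left (min_le_right _ _) hb.le
      _ = 1 := mul_inv_cancel₀ hb.ne'
  have h2 : b⁻¹ * min b b⁻¹ ≤ 1 := by
    calc b⁻¹ * min b b⁻¹ ≤ b⁻¹ * b := mul_le_mul_of_nonneg_left (min_le_left _ _) hb'.le
      _ = 1 := inv_mul_cancel₀ hb.ne'
  refine ⟨by positivity, by nlinarith, by nlinarith⟩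

lemma ebIntegrand_eq (b ε : ℝ) (z : ℂ) (t : ℝ) : ebIntegrand b ε z t =
    Complex.exp (-2 * Complex.I * z * ((t : ℂ) + Complex.I * (ε : ℂ))) * kerTwo b ε t := by
  rw [ebIntegrand, kerTwo, div_eq_mul_inv, Complex.ofReal_inv]

lemma eb_differentiableAt {b : ℝ} (hb : 0 < b) {z : ℂ} (hz : |z.im| < (b + b⁻¹) / 2) :
    DifferentiableAt ℂ (eb b) z := by
  obtain ⟨h0, h1, h2⟩ := aux_eps hb
  have hb' : 0 < b⁻¹ := inv_pos.2 hb
  set ε := π * min b b⁻¹ / 2 with hε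
  have hs : 0 < Real.sin (b⁻¹ * ε) := Real.sin_pos_of_pos_of_lt_pi (by positivity) h2
  have hs' : 0 < Real.sin (b * ε) := Real.sin_pos_of_pos_of_lt_pi (by positivity) h1
  have h := (aux_param (kerTwo_cont h0 hs hs') h0.le (kerTwo_bd hb h0 hs hs') hz).2
  have e : eb b = fun z => Complex.exp ((1 / 4 : ℂ) * ∫ t : ℝ,
      Complex.exp (-2 * Complex.I * z * ((t : ℂ) + Complex.I * (ε : ℂ))) * kerTwo b ε t) := by
    ext z
    simp only [eb, ebE, ebIntegrand_eq, hε]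
  rw [e]
  exact (h.differentiableAt.const_mul _).cexp

lemma eb_ne_zero (b : ℝ) (z : ℂ) : eb b z ≠ 0 := Complex.exp_ne_zero _

lemma eb_shift {b : ℝ} (hb : 0 < b) {z : ℂ} (hz : |z.im| < b⁻¹ / 2) :
    eb b (z - Complex.I * (b : ℂ) / 2) = phi b z * eb b (z + Complex.I * (b : ℂ) / 2) := by
  obtain ⟨h0, h1, h2⟩ := aux_eps hb
  have hb' : 0 < b⁻¹ := inv_pos.2 hb
  rw [← auxL_eq hb h0 h2 hz]
  set ε := π * min b b⁻¹ / 2 with hε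
  have hs : 0 < Real.sin (b⁻¹ * ε) := Real.sin_pos_of_pos_of_lt_pi (by positivity) h2
  have hs' : 0 < Real.sin (b * ε) := Real.sin_pos_of_pos_of_lt_pi (by positivity) h1
  have hz2 := abs_lt.1 hz
  have him : (Complex.I * (b : ℂ) / 2).im = b / 2 := by
    have : Complex.I * (b : ℂ) / 2 = ((b / 2 : ℝ) : ℂ) * Complex.I := by push_cast; ring
    rw [this]; simp
  have i1 := (aux_param (kerTwo_cont h0 hs hs') h0.le (kerTwo_bd hb h0 hs hs')
    (z := z - Complex.I * (b : ℂ) / 2)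
    (by rw [Complex.sub_im, him, abs_lt]; constructor <;> linarith)).1
  have i2 := (aux_param (kerTwo_cont h0 hs hs') h0.le (kerTwo_bd hb h0 hs hs')
    (z := z + Complex.I * (b : ℂ) / 2)
    (by rw [Complex.add_im, him, abs_lt]; constructor <;> linarith)).1
  simp only [eb, ebE, ebIntegrand_eq, ← hε]
  rw [← Complex.exp_add]
  congr 1
  have h3 : (∫ t : ℝ, Complex.exp (-2 * Complex.I * (z - Complex.I * (b : ℂ) / 2) *
      ((t : ℂ) + Complex.I * (ε : ℂ))) * kerTwo b ε t) -
      (∫ t : ℝ, Complex.exp (-2 * Complex.I * (z + Complex.I * (b : ℂ) / 2) *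
      ((t : ℂ) + Complex.I * (ε : ℂ))) * kerTwo b ε t) = -2 * auxL b ε z := by
    rw [← integral_sub i1 i2, auxL, ← integral_const_mul]
    congr 1
    ext t
    have n1 := aux_line_ne h0 t
    have n2 := aux_sinh_line_ne hs' t
    have n3 := aux_sinh_line_ne hs t
    unfold kerTwo kerOne
    set w := ((t : ℂ) + Complex.I * (ε : ℂ)) with hw
    have e1 : Complex.exp (-2 * Complex.I * (z - Complex.I * (b : ℂ) / 2) * w) =
        Complex.exp (-2 * Complex.I * z * w) * Complex.exp (-(b * w)) := by
      rw [← Complex.exp_add]; congr 1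
      linear_combination (b : ℂ) * w * Complex.I_sq
    have e2 : Complex.exp (-2 * Complex.I * (z + Complex.I * (b : ℂ) / 2) * w) =
        Complex.exp (-2 * Complex.I * z * w) * Complex.exp (b * w) := by
      rw [← Complex.exp_add]; congr 1
      linear_combination -(b : ℂ) * w * Complex.I_sq
    have e3 : Complex.exp (-(b * w)) = Complex.exp (b * w) - 2 * Complex.sinh (b * w) := by
      rw [Complex.two_sinh]; ring
    rw [e1, e2, e3]
    clear e1 e2 e3
    generalize Complex.sinh ((b : ℂ) * w) = s1 at *
    generalize Complex.sinh (((b⁻¹ : ℝ) : ℂ) * w) = s2 at *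
    field_simp
    ring
  linear_combination (1 / 4 : ℂ) * h3

lemma eb_inv (b : ℝ) (z : ℂ) : eb b⁻¹ z = eb b z := by
  simp only [eb, ebE, ebIntegrand, inv_inv, min_comm b⁻¹ b, Complex.ofReal_inv]
  congr 3
  ext t
  congr 1
  ring

/-- Correction factor for the continuation. -/
def pfac (b : ℝ) : ℤ → ℂ → ℂ
  | Int.ofNat n, z => ∏ k ∈ Finset.range n, (phi b (z - Complex.I * b * ((k : ℂ) + 1 / 2)))⁻¹
  | Int.negSucc n, z => ∏ k ∈ Finset.range (n + 1), phi b (z + Complex.I * b * ((k : ℂ) + 1 / 2))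

/-- Preliminary continuation of `eb`, correct away from a discrete set. -/
def ext0 (b : ℝ) (z : ℂ) : ℂ :=
  eb b (z - Complex.I * b * (⌊z.im / b + 1 / 2⌋ : ℤ)) * pfac b ⌊z.im / b + 1 / 2⌋ z

lemma pfac_shift {b : ℝ} {z : ℂ} (hz : phi b z ≠ 0) (n : ℤ) :
    pfac b n (z - Complex.I * (b : ℂ) / 2) =
      phi b z * pfac b (n + 1) (z + Complex.I * (b : ℂ) / 2) := by
  rcases n with n | n
  · have h : (Int.ofNat n + 1 : ℤ) = Int.ofNat (n + 1) := rfl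
    rw [h]
    simp only [pfac]
    rw [Finset.prod_range_succ']
    have e0 : z + Complex.I * (b : ℂ) / 2 - Complex.I * b * (((0 : ℕ) : ℂ) + 1 / 2) = z := by
      push_cast; ring
    rw [e0, mul_comm (phi b z), mul_assoc, inv_mul_cancel₀ hz, mul_one]
    refine Finset.prod_congr rfl fun k _ => ?_
    congr 2
    push_cast; ring
  · rcases n with _ | n
    · have h : (Int.negSucc 0 + 1 : ℤ) = Int.ofNat 0 := rfl
      rw [h]
      simp only [pfac, zero_add, Finset.prod_range_one, Finset.prod_range_zero, mul_one]
      congr 1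
      push_cast; ring
    · have h : (Int.negSucc (n + 1) + 1 : ℤ) = Int.negSucc n := rfl
      rw [h]
      simp only [pfac]
      rw [Finset.prod_range_succ', mul_comm]
      congr 1
      · congr 1
        push_cast; ring
      · refine Finset.prod_congr rfl fun k _ => ?_
        congr 1
        push_cast; ring

lemma aux_c_im (b : ℝ) : (Complex.I * (b : ℂ) / 2).im = b / 2 := by
  have : Complex.I * (b : ℂ) / 2 = ((b / 2 : ℝ) : ℂ) * Complex.I := by push_cast; ring
  rw [this]; simp

lemma ext0_shift {b : ℝ} (hb : 0 < b) {z : ℂ} (hz : phi b z ≠ 0) :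
    ext0 b (z - Complex.I * (b : ℂ) / 2) = phi b z * ext0 b (z + Complex.I * (b : ℂ) / 2) := by
  unfold ext0
  have h : ⌊(z + Complex.I * (b : ℂ) / 2).im / b + 1 / 2⌋ =
      ⌊(z - Complex.I * (b : ℂ) / 2).im / b + 1 / 2⌋ + 1 := by
    rw [← Int.floor_add_one]
    congr 1
    rw [Complex.add_im, Complex.sub_im, aux_c_im]
    field_simp
    ring
  rw [h, pfac_shift hz]
  have e : z + Complex.I * (b : ℂ) / 2 -
      Complex.I * b * ((⌊(z - Complex.I * (b : ℂ) / 2).im / b + 1 / 2⌋ + 1 : ℤ) : ℂ) =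
      z - Complex.I * (b : ℂ) / 2 -
      Complex.I * b * ((⌊(z - Complex.I * (b : ℂ) / 2).im / b + 1 / 2⌋ : ℤ) : ℂ) := by
    push_cast; ring
  rw [e]
  ring

lemma ext0_base {b : ℝ} (hb : 0 < b) {z : ℂ} (h1 : -(b / 2) ≤ z.im) (h2 : z.im < b / 2) :
    ext0 b z = eb b z := by
  have h : ⌊z.im / b + 1 / 2⌋ = 0 := by
    rw [Int.floor_eq_zero_iff]
    constructor
    · have : -(1 / 2) ≤ z.im / b := by rw [le_div_iff₀ hb]; linarith
      linarith
    · have : z.im / b < 1 / 2 := by rw [div_lt_iff₀ hb]; linarith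
      linarith
  have hp : pfac b 0 z = 1 := by
    change pfac b (Int.ofNat 0) z = 1
    simp [pfac]
  rw [ext0, h, hp]
  simp

lemma ext0_eq {b : ℝ} (hb : 0 < b) {z : ℂ} (hz : |z.im| < b / 2 + min b (b⁻¹ / 2)) :
    ext0 b z = eb b z := by
  have hz' := abs_lt.1 hz
  have m1 := min_le_left b (b⁻¹ / 2)
  have m2 := min_le_right b (b⁻¹ / 2)
  have hb' : 0 < b⁻¹ := inv_pos.2 hb
  by_cases c1 : b / 2 ≤ z.im
  · set w := z - Complex.I * (b : ℂ) / 2 with hw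
    have hwim : w.im = z.im - b / 2 := by rw [hw, Complex.sub_im, aux_c_im]
    have hws : |w.im| < b⁻¹ / 2 := by
      rw [abs_lt, hwim]; constructor <;> linarith
    have hne := phi_ne_zero_of_strip hb hws
    have s1 := ext0_shift hb hne
    have s2 := eb_shift hb hws
    have e : w + Complex.I * (b : ℂ) / 2 = z := by rw [hw]; ring
    have him : (w - Complex.I * (b : ℂ) / 2).im = z.im - b := by
      rw [Complex.sub_im, aux_c_im, hwim]; ring
    rw [ext0_base hb (by rw [him]; linarith) (by rw [him]; linarith), s2, e] at s1
    exact (mul_left_cancel₀ hne s1).symm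
  · by_cases c2 : -(b / 2) ≤ z.im
    · exact ext0_base hb c2 (not_le.1 c1)
    · push Not at c1 c2
      set w := z + Complex.I * (b : ℂ) / 2 with hw
      have hwim : w.im = z.im + b / 2 := by rw [hw, Complex.add_im, aux_c_im]
      have hws : |w.im| < b⁻¹ / 2 := by
        rw [abs_lt, hwim]; constructor <;> linarith
      have hne := phi_ne_zero_of_strip hb hws
      have s1 := ext0_shift hb hne
      have s2 := eb_shift hb hws
      have e : w - Complex.I * (b : ℂ) / 2 = z := by rw [hw]; ring
      have him : (w + Complex.I * (b : ℂ) / 2).im = z.im + b := by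
        rw [Complex.add_im, aux_c_im, hwim]; ring
      rw [ext0_base hb (z := w + _) (by rw [him]; linarith) (by rw [him]; linarith), e] at s1
      rw [e] at s2
      rw [s1, s2]

/-- Upward zeros of `phi`. -/
def upZ (b : ℝ) (z : ℂ) : Prop := ∃ j : ℕ, z = Complex.I * ((((j : ℝ) + 1 / 2) * b⁻¹ : ℝ) : ℂ)

/-- Downward zeros of `phi`. -/
def downZ (b : ℝ) (z : ℂ) : Prop :=
  ∃ j : ℕ, z = Complex.I * ((-(((j : ℝ) + 1 / 2) * b⁻¹) : ℝ) : ℂ)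

lemma phi_zero_iff_up_down {b : ℝ} (hb : 0 < b) (z : ℂ) :
    phi b z = 0 ↔ upZ b z ∨ downZ b z := by
  rw [phi_eq_zero_iff hb]
  constructor
  · rintro ⟨j, rfl⟩
    rcases j with j | j
    · left; exact ⟨j, by push_cast; rfl⟩
    · right; exact ⟨j, by push_cast; ring⟩
  · rintro (⟨j, rfl⟩ | ⟨j, rfl⟩)
    · exact ⟨j, by push_cast; ring⟩
    · exact ⟨-(j : ℤ) - 1, by push_cast; ring⟩

lemma mem_poles_iff (b : ℝ) (z : ℂ) : z ∈ ebPoles b ↔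
    ∃ m n : ℕ, z = Complex.I * ((((m : ℝ) + 1 / 2) * b + ((n : ℝ) + 1 / 2) * b⁻¹ : ℝ) : ℂ) := by
  unfold ebPoles cb
  simp only [Set.mem_setOf_eq]
  refine exists_congr fun m => exists_congr fun n => ?_
  have : Complex.I * ((b : ℂ) + (b : ℂ)⁻¹) / 2 +
      Complex.I * ((m : ℂ) * (b : ℂ) + (n : ℂ) * (b : ℂ)⁻¹) =
      Complex.I * ((((m : ℝ) + 1 / 2) * b + ((n : ℝ) + 1 / 2) * b⁻¹ : ℝ) : ℂ) := by
    push_cast; ring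
  rw [this]

lemma mem_zeros_iff (b : ℝ) (z : ℂ) : z ∈ ebZeros b ↔
    ∃ m n : ℕ, z = Complex.I * ((-(((m : ℝ) + 1 / 2) * b + ((n : ℝ) + 1 / 2) * b⁻¹) : ℝ) : ℂ) := by
  unfold ebZeros cb
  simp only [Set.mem_setOf_eq]
  refine exists_congr fun m => exists_congr fun n => ?_
  have : -(Complex.I * ((b : ℂ) + (b : ℂ)⁻¹) / 2) -
      Complex.I * ((m : ℂ) * (b : ℂ) + (n : ℂ) * (b : ℂ)⁻¹) =
      Complex.I * ((-(((m : ℝ) + 1 / 2) * b + ((n : ℝ) + 1 / 2) * b⁻¹) : ℝ) : ℂ) := by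
    push_cast; ring
  rw [this]

lemma poles_im {b : ℝ} (hb : 0 < b) {z : ℂ} (hz : z ∈ ebPoles b) : (b + b⁻¹) / 2 ≤ z.im := by
  obtain ⟨m, n, rfl⟩ := (mem_poles_iff b z).1 hz
  have hb' : 0 < b⁻¹ := inv_pos.2 hb
  rw [Complex.I_mul_im, Complex.ofReal_re]
  have h1 : (0 : ℝ) ≤ m * b := by positivity
  have h2 : (0 : ℝ) ≤ n * b⁻¹ := by positivity
  linarith

lemma zeros_im {b : ℝ} (hb : 0 < b) {z : ℂ} (hz : z ∈ ebZeros b) : z.im ≤ -((b + b⁻¹) / 2) := by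
  obtain ⟨m, n, rfl⟩ := (mem_zeros_iff b z).1 hz
  have hb' : 0 < b⁻¹ := inv_pos.2 hb
  rw [Complex.I_mul_im, Complex.ofReal_re]
  have h1 : (0 : ℝ) ≤ m * b := by positivity
  have h2 : (0 : ℝ) ≤ n * b⁻¹ := by positivity
  linarith

lemma upZ_im {b : ℝ} (hb : 0 < b) {z : ℂ} (hz : upZ b z) : 0 < z.im := by
  obtain ⟨m, rfl⟩ := hz
  have hb' : 0 < b⁻¹ := inv_pos.2 hb
  rw [Complex.I_mul_im, Complex.ofReal_re]
  positivity

lemma downZ_im {b : ℝ} (hb : 0 < b) {z : ℂ} (hz : downZ b z) : z.im < 0 := by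
  obtain ⟨m, rfl⟩ := hz
  have hb' : 0 < b⁻¹ := inv_pos.2 hb
  rw [Complex.I_mul_im, Complex.ofReal_re]
  have : 0 < ((m : ℝ) + 1 / 2) * b⁻¹ := by positivity
  linarith

lemma aux_irr {b : ℝ} (hb : 0 < b) (hirr : Irrational (b ^ 2)) (m n j : ℕ)
    (h : ((m : ℝ) + 1) * b = ((j : ℝ) - n) * b⁻¹) : False := by
  apply hirr
  refine ⟨((j : ℚ) - n) / ((m : ℚ) + 1), ?_⟩
  have hm : (m : ℝ) + 1 ≠ 0 := by positivity
  push_cast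
  rw [div_eq_iff hm]
  have h2 : ((j : ℝ) - n) = ((j : ℝ) - n) * b⁻¹ * b := by field_simp
  rw [h2, ← h]; ring

lemma up_not_pole {b : ℝ} (hb : 0 < b) (hirr : Irrational (b ^ 2)) {z : ℂ} (h : upZ b z) :
    z - Complex.I * (b : ℂ) / 2 ∉ ebPoles b := by
  intro hp
  obtain ⟨m, n, hmn⟩ := (mem_poles_iff b _).1 hp
  obtain ⟨j, rfl⟩ := h
  have := congrArg Complex.im hmn
  rw [Complex.sub_im, aux_c_im, Complex.I_mul_im, Complex.ofReal_re, Complex.I_mul_im,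
    Complex.ofReal_re] at this
  exact aux_irr hb hirr m n j (by linarith)

lemma down_not_zero {b : ℝ} (hb : 0 < b) (hirr : Irrational (b ^ 2)) {z : ℂ} (h : downZ b z) :
    z + Complex.I * (b : ℂ) / 2 ∉ ebZeros b := by
  intro hp
  obtain ⟨m, n, hmn⟩ := (mem_zeros_iff b _).1 hp
  obtain ⟨j, rfl⟩ := h
  have := congrArg Complex.im hmn
  rw [Complex.add_im, aux_c_im, Complex.I_mul_im, Complex.ofReal_re, Complex.I_mul_im,
    Complex.ofReal_re] at this
  exact aux_irr hb hirr m n j (by linarith)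

lemma pole_shift (b : ℝ) (z : ℂ) : z + Complex.I * (b : ℂ) / 2 ∈ ebPoles b ↔
    z - Complex.I * (b : ℂ) / 2 ∈ ebPoles b ∨ upZ b z := by
  rw [mem_poles_iff, mem_poles_iff]
  constructor
  · rintro ⟨m, n, h⟩
    rcases m with _ | m
    · right
      refine ⟨n, ?_⟩
      rw [eq_sub_of_add_eq h]; push_cast; ring
    · left
      refine ⟨m, n, ?_⟩
      rw [eq_sub_of_add_eq h]; push_cast; ring
  · rintro (⟨m, n, h⟩ | ⟨n, rfl⟩)
    · refine ⟨m + 1, n, ?_⟩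
      rw [eq_add_of_sub_eq h]; push_cast; ring
    · refine ⟨0, n, ?_⟩
      push_cast; ring

lemma zero_shift (b : ℝ) (z : ℂ) : z - Complex.I * (b : ℂ) / 2 ∈ ebZeros b ↔
    z + Complex.I * (b : ℂ) / 2 ∈ ebZeros b ∨ downZ b z := by
  rw [mem_zeros_iff, mem_zeros_iff]
  constructor
  · rintro ⟨m, n, h⟩
    rcases m with _ | m
    · right
      refine ⟨n, ?_⟩
      rw [eq_add_of_sub_eq h]; push_cast; ring
    · left
      refine ⟨m, n, ?_⟩
      rw [eq_add_of_sub_eq h]; push_cast; ring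
  · rintro (⟨m, n, h⟩ | ⟨n, rfl⟩)
    · refine ⟨m + 1, n, ?_⟩
      rw [eq_sub_of_add_eq h]; push_cast; ring
    · refine ⟨0, n, ?_⟩
      push_cast; ring

open Classical in
/-- Expected order. -/
def nu (b : ℝ) (z : ℂ) : ℤ := if z ∈ ebPoles b then -1 else if z ∈ ebZeros b then 1 else 0

open Classical in
lemma nu_shift {b : ℝ} (hb : 0 < b) (hirr : Irrational (b ^ 2)) (z : ℂ) :
    nu b (z - Complex.I * (b : ℂ) / 2) =
      (if phi b z = 0 then 1 else 0) + nu b (z + Complex.I * (b : ℂ) / 2) := by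
  have hb' : 0 < b⁻¹ := inv_pos.2 hb
  have hp := pole_shift b z
  have hz := zero_shift b z
  have hd := phi_zero_iff_up_down hb z
  by_cases hu : upZ b z
  · have h1 := up_not_pole hb hirr hu
    have h2 := upZ_im hb hu
    have h3 : ¬ downZ b z := fun h => by linarith [downZ_im hb h]
    have h4 : z + Complex.I * (b : ℂ) / 2 ∉ ebZeros b := fun h => by
      have := zeros_im hb h
      rw [Complex.add_im, aux_c_im] at this
      linarith
    simp [nu, hp, hz, hd, hu, h1, h3, h4]
  · by_cases hw : downZ b z
    · have h1 := down_not_zero hb hirr hw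
      have h2 := downZ_im hb hw
      have h4 : z - Complex.I * (b : ℂ) / 2 ∉ ebPoles b := fun h => by
        have := poles_im hb h
        rw [Complex.sub_im, aux_c_im] at this
        linarith
      simp [nu, hp, hz, hd, hu, hw, h1, h4]
    · simp [nu, hp, hz, hd, hu, hw]


lemma phi_analyticAt (b : ℝ) (z : ℂ) : AnalyticAt ℂ (phi b) z := by
  have h : Differentiable ℂ (phi b) := fun w => (phi_hasDerivAt b w).differentiableAt
  exact h.analyticAt z

open Classical in
lemma phi_order {b : ℝ} (hb : 0 < b) (z : ℂ) :
    meromorphicOrderAt (phi b) z = ((if phi b z = 0 then 1 else 0 : ℤ) : WithTop ℤ) := by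
  split_ifs with h
  · have hd : deriv (phi b) z ≠ 0 := by
      rw [(phi_hasDerivAt b z).deriv]
      have h1 : (π : ℂ) ≠ 0 := by exact_mod_cast Real.pi_ne_zero
      have h2 : (b : ℂ) ≠ 0 := by exact_mod_cast hb.ne'
      have h3 := Complex.exp_ne_zero (2 * (π : ℂ) * (b : ℂ) * z)
      exact mul_ne_zero (mul_ne_zero (mul_ne_zero two_ne_zero h1) h2) h3
    rw [(phi_analyticAt b z).meromorphicOrderAt_eq,
      (phi_analyticAt b z).analyticOrderAt_eq_one_of_zero_deriv_ne_zero h hd]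
    rfl
  · exact (phi_analyticAt b z).meromorphicNFAt.meromorphicOrderAt_eq_zero_iff.2 h

lemma phi_ev_ne {b : ℝ} (hb : 0 < b) (z : ℂ) : ∀ᶠ w in 𝓝[≠] z, phi b w ≠ 0 := by
  refine (meromorphicOrderAt_ne_top_iff_eventually_ne_zero
    (phi_analyticAt b z).meromorphicAt).1 ?_
  rw [phi_order hb]
  exact WithTop.coe_ne_top

lemma eb_analyticAt {b : ℝ} (hb : 0 < b) {z : ℂ} (hz : |z.im| < (b + b⁻¹) / 2) :
    AnalyticAt ℂ (eb b) z := by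
  have hSo : IsOpen {w : ℂ | |w.im| < (b + b⁻¹) / 2} := isOpen_lt (by fun_prop) continuous_const
  have hd : DifferentiableOn ℂ (eb b) {w : ℂ | |w.im| < (b + b⁻¹) / 2} :=
    fun w hw => (eb_differentiableAt hb hw).differentiableWithinAt
  exact hd.analyticAt (hSo.mem_nhds hz)

lemma not_pole_of_strip {b : ℝ} (hb : 0 < b) {z : ℂ} (hz : |z.im| < (b + b⁻¹) / 2) :
    z ∉ ebPoles b := fun h => by
  have := poles_im hb h
  have := abs_lt.1 hz
  linarith

lemma not_zero_of_strip {b : ℝ} (hb : 0 < b) {z : ℂ} (hz : |z.im| < (b + b⁻¹) / 2) :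
    z ∉ ebZeros b := fun h => by
  have := zeros_im hb h
  have := abs_lt.1 hz
  linarith

/-- The continuation has the predicted order at `z`. -/
def ordOK (b : ℝ) (z : ℂ) : Prop :=
  MeromorphicAt (ext0 b) z ∧ meromorphicOrderAt (ext0 b) z = ((nu b z : ℤ) : WithTop ℤ)

lemma ext0_ev {b : ℝ} (hb : 0 < b) {z : ℂ} (hz : |z.im| ≤ b / 2) :
    ext0 b =ᶠ[𝓝 z] eb b := by
  have hb' : 0 < b⁻¹ := inv_pos.2 hb
  have hm : 0 < min b (b⁻¹ / 2) := lt_min hb (by linarith)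
  have hSo : IsOpen {w : ℂ | |w.im| < b / 2 + min b (b⁻¹ / 2)} :=
    isOpen_lt (by fun_prop) continuous_const
  filter_upwards [hSo.mem_nhds (show |z.im| < b / 2 + min b (b⁻¹ / 2) by linarith)] with w hw
  exact ext0_eq hb hw

lemma ordOK_base {b : ℝ} (hb : 0 < b) {z : ℂ} (hz : |z.im| ≤ b / 2) : ordOK b z := by
  have hb' : 0 < b⁻¹ := inv_pos.2 hb
  have hz' : |z.im| < (b + b⁻¹) / 2 := by linarith
  have ha : AnalyticAt ℂ (ext0 b) z := (eb_analyticAt hb hz').congr (ext0_ev hb hz).symm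
  refine ⟨ha.meromorphicAt, ?_⟩
  have hnu : nu b z = 0 := by
    simp [nu, not_pole_of_strip hb hz', not_zero_of_strip hb hz']
  rw [hnu]
  refine ha.meromorphicNFAt.meromorphicOrderAt_eq_zero_iff.2 ?_
  rw [(ext0_ev hb hz).self_of_nhds]
  exact eb_ne_zero b z

lemma ordOK_shift {b : ℝ} (hb : 0 < b) (hirr : Irrational (b ^ 2)) (z : ℂ) :
    ordOK b (z - Complex.I * (b : ℂ) / 2) ↔ ordOK b (z + Complex.I * (b : ℂ) / 2) := by
  classical
  set c : ℂ := Complex.I * (b : ℂ) / 2 with hc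
  have e1 : (ext0 b ∘ (· - c)) =ᶠ[𝓝[≠] z] phi b * (ext0 b ∘ (· + c)) := by
    filter_upwards [phi_ev_ne hb z] with w hw
    simpa using ext0_shift hb hw
  have e2 : (ext0 b ∘ (· + c)) =ᶠ[𝓝[≠] z] (phi b)⁻¹ * (ext0 b ∘ (· - c)) := by
    filter_upwards [phi_ev_ne hb z] with w hw
    have := ext0_shift hb hw
    simp only [Function.comp, Pi.mul_apply, Pi.inv_apply]
    rw [hc, this, ← mul_assoc, inv_mul_cancel₀ hw, one_mul]
  have hp := (phi_analyticAt b z).meromorphicAt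
  have hnu := nu_shift hb hirr z
  have ho := phi_order hb z
  rw [← hc] at hnu
  unfold ordOK
  constructor
  · rintro ⟨h1, h2⟩
    have h1' := meromorphicAt_comp_sub_const_iff_meromorphicAt.2 h1
    refine ⟨meromorphicAt_comp_add_const_iff_meromorphicAt.1
      ((hp.inv.mul h1').congr e2.symm), ?_⟩
    rw [← meromorphicOrderAt_comp_add_const_eq_meromorphicOrderAt, meromorphicOrderAt_congr e2,
      meromorphicOrderAt_mul hp.inv h1', meromorphicOrderAt_inv, ho,
      meromorphicOrderAt_comp_sub_const_eq_meromorphicOrderAt, h2, hnu]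
    have : ∀ a d : ℤ, -(a : WithTop ℤ) + ((a + d : ℤ) : WithTop ℤ) = (d : WithTop ℤ) := by
      intro a d
      have h : -(a : WithTop ℤ) = ((-a : ℤ) : WithTop ℤ) := rfl
      rw [h, ← WithTop.coe_add]
      congr 1
      ring
    exact this _ _
  · rintro ⟨h1, h2⟩
    have h1' := meromorphicAt_comp_add_const_iff_meromorphicAt.2 h1
    refine ⟨meromorphicAt_comp_sub_const_iff_meromorphicAt.1
      ((hp.mul h1').congr e1.symm), ?_⟩
    rw [← meromorphicOrderAt_comp_sub_const_eq_meromorphicOrderAt, meromorphicOrderAt_congr e1,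
      meromorphicOrderAt_mul hp h1', ho,
      meromorphicOrderAt_comp_add_const_eq_meromorphicOrderAt, h2, hnu, ← WithTop.coe_add]

lemma ordOK_aux {b : ℝ} (hb : 0 < b) (hirr : Irrational (b ^ 2)) (n : ℕ) :
    ∀ z : ℂ, |z.im| ≤ b / 2 + n * b → ordOK b z := by
  induction n with
  | zero =>
    intro z hz
    refine ordOK_base hb ?_
    simpa using hz
  | succ n ih =>
    intro z hz
    push_cast at hz
    have hz' := abs_le.1 hz
    have hnb : 0 ≤ (n : ℝ) * b := by positivity
    by_cases h0 : |z.im| ≤ b / 2 + n * b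
    · exact ih z h0
    rcases le_total 0 z.im with h | h
    · have hs := ordOK_shift hb hirr (z - Complex.I * (b : ℂ) / 2)
      rw [sub_add_cancel] at hs
      refine hs.1 (ih _ ?_)
      rw [abs_of_nonneg h] at h0
      rw [Complex.sub_im, Complex.sub_im, aux_c_im, abs_le]
      constructor <;> linarith
    · have hs := ordOK_shift hb hirr (z + Complex.I * (b : ℂ) / 2)
      rw [add_sub_cancel_right] at hs
      refine hs.2 (ih _ ?_)
      rw [abs_of_nonpos h] at h0
      rw [Complex.add_im, Complex.add_im, aux_c_im, abs_le]
      constructor <;> linarith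

lemma ordOK_all {b : ℝ} (hb : 0 < b) (hirr : Irrational (b ^ 2)) (z : ℂ) : ordOK b z := by
  obtain ⟨n, hn⟩ := exists_nat_ge (|z.im| / b)
  refine ordOK_aux hb hirr n z ?_
  rw [div_le_iff₀ hb] at hn
  linarith

lemma poles_countable (b : ℝ) : (ebPoles b).Countable := by
  have : ebPoles b = Set.range (fun p : ℕ × ℕ =>
      cb b + Complex.I * ((p.1 : ℂ) * (b : ℂ) + (p.2 : ℂ) * (b : ℂ)⁻¹)) := by
    ext z
    constructor
    · rintro ⟨m, n, h⟩
      exact ⟨(m, n), h.symm⟩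
    · rintro ⟨⟨m, n⟩, h⟩
      exact ⟨m, n, h.symm⟩
  rw [this]
  exact Set.countable_range _

lemma ident_aux {P : Set ℂ} (hP : P.Countable) (h0 : (0 : ℂ) ∉ P) {f g : ℂ → ℂ}
    (hf : ∀ z ∉ P, AnalyticAt ℂ f z) (hg : ∀ z ∉ P, AnalyticAt ℂ g z)
    (h : f =ᶠ[𝓝 0] g) (z : ℂ) (hz : z ∉ P) : f z = g z := by
  have hc : IsPreconnected Pᶜ := (hP.isConnected_compl_of_one_lt_rank (by
    rw [Complex.rank_real_complex]; exact_mod_cast one_lt_two)).isPreconnected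
  exact AnalyticOnNhd.eqOn_of_preconnected_of_eventuallyEq (U := Pᶜ)
    (fun w hw => hf w hw) (fun w hw => hg w hw) hc h0 h hz

lemma shift_aux {a : ℝ} {P : Set ℂ} (hP : P.Countable) {f : ℂ → ℂ} {r : ℝ} (hr : 0 < r)
    (har : a / 2 < r) (ha : 0 < a)
    (hPr : ∀ z ∈ P, r ≤ z.im)
    (hf : ∀ z ∉ P, AnalyticAt ℂ f z)
    {d : ℝ} (hd : 0 < d)
    (h : ∀ z : ℂ, |z.im| < d → f (z - Complex.I * (a : ℂ) / 2) =
      phi a z * f (z + Complex.I * (a : ℂ) / 2)) (z : ℂ)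
    (h1 : z - Complex.I * (a : ℂ) / 2 ∉ P) (h2 : z + Complex.I * (a : ℂ) / 2 ∉ P) :
    f (z - Complex.I * (a : ℂ) / 2) = phi a z * f (z + Complex.I * (a : ℂ) / 2) := by
  set c : ℂ := Complex.I * (a : ℂ) / 2 with hc
  have hcim : c.im = a / 2 := aux_c_im a
  set Q : Set ℂ := (fun w => w - c) ⁻¹' P ∪ (fun w => w + c) ⁻¹' P with hQ
  have hQc : Q.Countable := by
    refine Set.Countable.union ?_ ?_
    · exact hP.preimage_of_injOn (sub_left_injective.injOn)
    · exact hP.preimage_of_injOn ((add_left_injective c).injOn)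
  refine ident_aux (P := Q) (f := fun w => f (w - c)) (g := fun w => phi a w * f (w + c))
    hQc ?_ ?_ ?_ ?_ z ?_
  · rintro (h | h)
    · have := hPr _ h
      simp [hcim] at this
      linarith
    · have := hPr _ h
      simp [hcim] at this
      linarith
  · intro w hw
    have : AnalyticAt ℂ f (w - c) := hf _ fun h => hw (Or.inl h)
    exact this.comp_of_eq (f := fun w => w - c) (by fun_prop) rfl
  · intro w hw
    have : AnalyticAt ℂ f (w + c) := hf _ fun h => hw (Or.inr h)
    exact (phi_analyticAt a w).mul (this.comp_of_eq (f := fun w => w + c) (by fun_prop) rfl)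
  · have hSo : IsOpen {w : ℂ | |w.im| < d} := isOpen_lt (by fun_prop) continuous_const
    filter_upwards [hSo.mem_nhds (show |(0 : ℂ).im| < d by simpa using hd)] with w hw
    exact h w hw
  · rintro (h | h)
    · exact h1 h
    · exact h2 h

/-- `e_b` extends uniquely to a meromorphic function on `ℂ` satisfying the
two shift equations, whose poles are exactly the points `c_b + i(mb+nb⁻¹)` (all simple)
and whose zeros are exactly the points `-c_b - i(mb+nb⁻¹)` (all simple). -/
theorem statement1 (b : ℝ) (hb : 0 < b) (hirr : Irrational (b ^ 2)) :
    ∃ f : ℂ → ℂ,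
      ((∀ z : ℂ, |z.im| < (b + b⁻¹) / 2 → f z = eb b z) ∧
        (∀ z : ℂ, z ∉ ebPoles b → AnalyticAt ℂ f z) ∧
        (∀ z : ℂ, z - Complex.I * (b : ℂ) / 2 ∉ ebPoles b →
          z + Complex.I * (b : ℂ) / 2 ∉ ebPoles b →
          f (z - Complex.I * (b : ℂ) / 2) =
            (1 + Complex.exp (2 * (π : ℂ) * (b : ℂ) * z)) * f (z + Complex.I * (b : ℂ) / 2)) ∧
        (∀ z : ℂ, z - Complex.I * (b : ℂ)⁻¹ / 2 ∉ ebPoles b →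
          z + Complex.I * (b : ℂ)⁻¹ / 2 ∉ ebPoles b →
          f (z - Complex.I * (b : ℂ)⁻¹ / 2) =
            (1 + Complex.exp (2 * (π : ℂ) * (b : ℂ)⁻¹ * z)) *
              f (z + Complex.I * (b : ℂ)⁻¹ / 2)) ∧
        (∀ p ∈ ebPoles b, ∃ c : ℂ, c ≠ 0 ∧
          Tendsto (fun w => (w - p) * f w) (𝓝[≠] p) (𝓝 c)) ∧
        (∀ z : ℂ, z ∉ ebPoles b → (f z = 0 ↔ z ∈ ebZeros b)) ∧
        (∀ z ∈ ebZeros b, deriv f z ≠ 0)) ∧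
      (∀ g : ℂ → ℂ,
        (∀ z : ℂ, |z.im| < (b + b⁻¹) / 2 → g z = eb b z) →
        (∀ z : ℂ, z ∉ ebPoles b → AnalyticAt ℂ g z) →
        ∀ z : ℂ, z ∉ ebPoles b → g z = f z) := by
  have hb' : 0 < b⁻¹ := inv_pos.2 hb
  have hmer : MeromorphicOn (ext0 b) Set.univ := fun z _ => (ordOK_all hb hirr z).1
  set f := toMeromorphicNFOn (ext0 b) Set.univ with hf
  have hNF : ∀ z, MeromorphicNFAt f z := fun z =>
    meromorphicNFOn_toMeromorphicNFOn (ext0 b) Set.univ (Set.mem_univ z)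
  have hord : ∀ z, meromorphicOrderAt f z = ((nu b z : ℤ) : WithTop ℤ) := fun z => by
    rw [hf, meromorphicOrderAt_toMeromorphicNFOn hmer (Set.mem_univ z)]
    exact (ordOK_all hb hirr z).2
  have hdisj : ∀ z ∈ ebZeros b, z ∉ ebPoles b := fun z hz hp => by
    have := zeros_im hb hz
    have := poles_im hb hp
    linarith
  have han : ∀ z, z ∉ ebPoles b → AnalyticAt ℂ f z := fun z hz => by
    rw [← (hNF z).meromorphicOrderAt_nonneg_iff_analyticAt, hord]
    have : 0 ≤ nu b z := by
      unfold nu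
      rw [if_neg hz]
      split_ifs <;> norm_num
    exact_mod_cast this
  have h00 : |(0 : ℂ).im| < (b + b⁻¹) / 2 := by simp; positivity
  have hf0 : f =ᶠ[𝓝 0] eb b := by
    rw [← (hNF 0).eventuallyEq_nhdsNE_iff_eventuallyEq_nhds (eb_analyticAt hb h00).meromorphicNFAt]
    have h1 := MeromorphicOn.toMeromorphicNFOn_eq_self_on_nhdsNE hmer (Set.mem_univ (0 : ℂ))
    have h2 : ext0 b =ᶠ[𝓝 0] eb b := ext0_ev hb (by simp; positivity)
    exact h1.trans (h2.filter_mono nhdsWithin_le_nhds)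
  have hstrip : ∀ z : ℂ, |z.im| < (b + b⁻¹) / 2 → f z = eb b z := by
    have hSc : Convex ℝ {z : ℂ | |z.im| < (b + b⁻¹) / 2} := by
      have : {z : ℂ | |z.im| < (b + b⁻¹) / 2} =
          Complex.imLm ⁻¹' (Set.Ioo (-((b + b⁻¹) / 2)) ((b + b⁻¹) / 2)) := by
        ext w; simp [abs_lt]
      rw [this]
      exact (convex_Ioo _ _).linear_preimage _
    intro z hz
    exact AnalyticOnNhd.eqOn_of_preconnected_of_eventuallyEq
      (U := {z : ℂ | |z.im| < (b + b⁻¹) / 2})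
      (fun w hw => han w (not_pole_of_strip hb hw)) (fun w hw => eb_analyticAt hb hw)
      hSc.isPreconnected h00 hf0 hz
  refine ⟨f, ⟨hstrip, han, ?_, ?_, ?_, ?_, ?_⟩, ?_⟩
  · intro z h1 h2
    refine shift_aux (poles_countable b) (r := (b + b⁻¹) / 2) (by positivity) (by linarith) hb
      (fun w hw => poles_im hb hw) han (d := b⁻¹ / 2) (by positivity) ?_ z h1 h2
    intro w hw
    have hw' := abs_lt.1 hw
    rw [hstrip, hstrip]
    · exact eb_shift hb hw
    · rw [Complex.add_im, aux_c_im, abs_lt]; constructor <;> linarith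
    · rw [Complex.sub_im, aux_c_im, abs_lt]; constructor <;> linarith
  · intro z h1 h2
    have key := shift_aux (a := b⁻¹) (poles_countable b) (r := (b + b⁻¹) / 2) (by positivity)
      (by linarith) hb' (fun w hw => poles_im hb hw) han (d := b / 2) (by positivity) ?_ z
      (by push_cast; exact h1) (by push_cast; exact h2)
    · simpa only [phi, Complex.ofReal_inv] using key
    intro w hw
    have hw' := abs_lt.1 hw
    rw [hstrip, hstrip]
    · have := eb_shift hb' (z := w) (by rw [inv_inv]; exact hw)
      rw [eb_inv, eb_inv] at this
      exact this
    · rw [Complex.add_im, aux_c_im, abs_lt]; constructor <;> linarith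
    · rw [Complex.sub_im, aux_c_im, abs_lt]; constructor <;> linarith
  · intro p hp
    have ho : meromorphicOrderAt f p = ((-1 : ℤ) : WithTop ℤ) := by
      rw [hord]; simp only [nu, if_pos hp]
    obtain ⟨g, hg, hg0, hfg⟩ := (meromorphicOrderAt_eq_int_iff (hNF p).meromorphicAt).1 ho
    refine ⟨g p, hg0, ?_⟩
    refine (hg.continuousAt.tendsto.mono_left nhdsWithin_le_nhds).congr' ?_
    filter_upwards [hfg, self_mem_nhdsWithin] with w hw hne
    have hne' : w - p ≠ 0 := sub_ne_zero.2 hne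
    rw [hw, zpow_neg_one, smul_eq_mul, ← mul_assoc, mul_inv_cancel₀ hne', one_mul]
  · intro z hz
    have h := (hNF z).meromorphicOrderAt_eq_zero_iff
    rw [hord] at h
    have h2 : ((nu b z : ℤ) : WithTop ℤ) = 0 ↔ z ∉ ebZeros b := by
      have : ((nu b z : ℤ) : WithTop ℤ) = 0 ↔ nu b z = 0 := by norm_cast
      rw [this]
      simp [nu, hz]
    rw [h2] at h
    tauto
  · intro z hz
    have ho : meromorphicOrderAt f z = ((1 : ℤ) : WithTop ℤ) := by
      rw [hord]; simp only [nu, if_neg (hdisj z hz), if_pos hz]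
    have hd := meromorphicOrderAt_deriv_eq_sub_one (by norm_num) ho
    refine (han z (hdisj z hz)).deriv.meromorphicNFAt.meromorphicOrderAt_eq_zero_iff.1 ?_
    rw [hd]
    rfl
  · intro g hg1 hg2 z hz
    refine ident_aux (poles_countable b) (not_pole_of_strip hb h00) hg2 han ?_ z hz
    have hSo : IsOpen {w : ℂ | |w.im| < (b + b⁻¹) / 2} := isOpen_lt (by fun_prop) continuous_const
    filter_upwards [hSo.mem_nhds h00] with w hw
    rw [hg1 w hw, hstrip w hw]

end
end

section
/- Let b > 0 be real. For every z ∈ ℂ with |Im z| < 1/(2b) one has e_b(z − ib/2) = (1 + e^{2πbz})·e_b(z + ib/2), where both sides are given directly by the integral representation of e_b (both arguments lie in the strip |Im z| < (b+b⁻¹)/2). -/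
open MeasureTheory Complex Real Filter Topology

noncomputable section

def gK (η t : ℝ) : ℝ := Real.exp (2 * η * t) / Real.cosh t

lemma gK_nonneg (η t : ℝ) : 0 ≤ gK η t := by
  unfold gK; have := Real.cosh_pos t; positivity

lemma gK_continuous (η : ℝ) : Continuous (gK η) := by
  unfold gK
  exact (by fun_prop : Continuous fun t : ℝ => Real.exp (2 * η * t)).div Real.continuous_cosh
    (fun t => (Real.cosh_pos t).ne')

lemma gK_le_right (η t : ℝ) : gK η t ≤ 2 * Real.exp (-(1 - 2 * η) * t) := by
  unfold gK
  rw [div_le_iff₀ (Real.cosh_pos t), Real.cosh_eq]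
  have h : 2 * Real.exp (-(1 - 2 * η) * t) * ((Real.exp t + Real.exp (-t)) / 2) =
      Real.exp (2 * η * t) + Real.exp (-(1 - 2 * η) * t) * Real.exp (-t) := by
    have : Real.exp (2 * η * t) = Real.exp (-(1 - 2 * η) * t) * Real.exp t := by
      rw [← Real.exp_add]; ring_nf
    rw [this]; ring
  rw [h]
  have := mul_pos (Real.exp_pos (-(1 - 2 * η) * t)) (Real.exp_pos (-t))
  linarith

lemma gK_neg (η t : ℝ) : gK η (-t) = gK (-η) t := by
  unfold gK; rw [Real.cosh_neg]; ring_nf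

lemma gK_le_left (η t : ℝ) : gK η t ≤ 2 * Real.exp ((1 + 2 * η) * t) := by
  have := gK_le_right (-η) (-t)
  rw [gK_neg, neg_neg] at this
  convert this using 3; ring

lemma gK_integrable {η : ℝ} (h : |η| < 1 / 2) : Integrable (gK η) := by
  obtain ⟨h1, h2⟩ := abs_lt.1 h
  rw [← integrableOn_univ, ← Set.Iic_union_Ioi (a := (0:ℝ)), integrableOn_union]
  constructor
  · refine Integrable.mono' ((integrableOn_exp_mul_Iic (a := 1 + 2 * η) (by linarith) 0).const_mul 2)
      (gK_continuous η).aestronglyMeasurable (ae_of_all _ fun t => ?_)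
    rw [Real.norm_of_nonneg (gK_nonneg _ _)]; exact gK_le_left η t
  · refine Integrable.mono' ((integrableOn_exp_mul_Ioi (a := -(1 - 2 * η)) (by linarith) 0).const_mul 2)
      (gK_continuous η).aestronglyMeasurable (ae_of_all _ fun t => ?_)
    rw [Real.norm_of_nonneg (gK_nonneg _ _)]; exact gK_le_right η t

lemma gK_tendsto {η : ℝ} (h : |η| < 1 / 2) : Tendsto (gK η) atTop (𝓝 0) := by
  obtain ⟨h1, h2⟩ := abs_lt.1 h
  refine squeeze_zero (gK_nonneg η) (gK_le_right η) ?_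
  have : Tendsto (fun t : ℝ => (-(1 - 2 * η)) * t) atTop atBot :=
    tendsto_id.const_mul_atTop_of_neg (by linarith)
  simpa using (Real.tendsto_exp_atBot.comp this).const_mul 2

lemma norm_num_exp (x : ℂ) (t y : ℝ) :
    ‖Complex.exp (-2 * I * x * ((t : ℂ) + I * (y : ℂ)))‖ =
      Real.exp (2 * x.re * y) * Real.exp (2 * x.im * t) := by
  rw [Complex.norm_exp, ← Real.exp_add]
  congr 1
  simp

lemma sinh_lower_s2 (t y : ℝ) : |Real.sin y| * Real.cosh t ≤ ‖Complex.sinh ((t : ℂ) + I * (y : ℂ))‖ := by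
  have h : (Complex.sinh ((t : ℂ) + I * (y : ℂ))).im = Real.cosh t * Real.sin y := by
    rw [mul_comm I, Complex.sinh_add, Complex.sinh_mul_I, Complex.cosh_mul_I, ← Complex.ofReal_sinh,
      ← Complex.ofReal_cosh, ← Complex.ofReal_sin, ← Complex.ofReal_cos]
    simp only [add_im, mul_im, ofReal_re, ofReal_im, mul_re, I_re, I_im]
    ring
  refine le_trans ?_ (Complex.abs_im_le_norm _)
  rw [h, abs_mul, abs_of_pos (Real.cosh_pos t), mul_comm]

lemma sinh_ne_s2 {t y : ℝ} (h : 0 < Real.sin y) : Complex.sinh ((t : ℂ) + I * (y : ℂ)) ≠ 0 := by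
  have h1 := sinh_lower_s2 t y
  have h2 : 0 < |Real.sin y| * Real.cosh t := mul_pos (abs_pos.2 h.ne') (Real.cosh_pos t)
  exact norm_pos_iff.1 (h2.trans_le h1)

lemma lin_lower (t y : ℝ) : |y| ≤ ‖(t : ℂ) + I * (y : ℂ)‖ := by
  have := Complex.abs_im_le_norm ((t : ℂ) + I * (y : ℂ))
  simpa using this

lemma lin_ne {t y : ℝ} (h : 0 < y) : (t : ℂ) + I * (y : ℂ) ≠ 0 :=
  norm_pos_iff.1 ((abs_pos.2 h.ne').trans_le (lin_lower t y))

def fK (x u : ℂ) : ℂ := Complex.exp (-2 * I * x * u) / (u * Complex.sinh u)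

lemma fK_bound (x : ℂ) {t y δ : ℝ} (hδ : 0 < δ) (hy : δ ≤ y) (hs : 0 < Real.sin δ)
    (hsy : Real.sin δ ≤ Real.sin y) :
    ‖fK x ((t : ℂ) + I * (y : ℂ))‖ ≤
      Real.exp (2 * x.re * y) / (δ * Real.sin δ) * gK x.im t := by
  unfold fK gK
  rw [norm_div, norm_num_exp, norm_mul, div_mul_div_comm]
  have hc := Real.cosh_pos t
  have h1 : δ ≤ ‖(t : ℂ) + I * (y : ℂ)‖ := hy.trans ((le_abs_self y).trans (lin_lower t y))
  have h2 : Real.sin δ * Real.cosh t ≤ ‖Complex.sinh ((t : ℂ) + I * (y : ℂ))‖ :=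
    le_trans (mul_le_mul_of_nonneg_right (hsy.trans (le_abs_self _)) hc.le) (sinh_lower_s2 t y)
  apply div_le_div_of_nonneg_left (by positivity) (by positivity)
  rw [mul_assoc]
  exact mul_le_mul h1 h2 (by positivity) (by positivity)

lemma fK_differentiableAt (x : ℂ) {u : ℂ} (h : u * Complex.sinh u ≠ 0) :
    DifferentiableAt ℂ (fK x) u := by
  unfold fK
  exact DifferentiableAt.div (c := fun u => Complex.exp (-2 * I * x * u))
    (d := fun u => u * Complex.sinh u) (by fun_prop) (by fun_prop) h

lemma fK_continuous_line (x : ℂ) {y : ℝ} (hy : 0 < y) (hs : 0 < Real.sin y) :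
    Continuous fun t : ℝ => fK x ((t : ℂ) + I * (y : ℂ)) := by
  rw [continuous_iff_continuousAt]
  intro t
  have := (fK_differentiableAt x (mul_ne_zero (lin_ne (t := t) hy) (sinh_ne_s2 (t := t) hs))).continuousAt
  exact ContinuousAt.comp (f := fun t : ℝ => (t : ℂ) + I * (y : ℂ)) this (by fun_prop)

lemma fK_integrable {x : ℂ} (hx : |x.im| < 1 / 2) {y : ℝ} (hy : 0 < y) (hs : 0 < Real.sin y) :
    Integrable fun t : ℝ => fK x ((t : ℂ) + I * (y : ℂ)) :=
  Integrable.mono' ((gK_integrable hx).const_mul _) (fK_continuous_line x hy hs).aestronglyMeasurable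
    (ae_of_all _ fun _ => fK_bound x hy le_rfl hs le_rfl)

lemma shift {x : ℂ} (hx : |x.im| < 1 / 2) {δ : ℝ} (hδ : 0 < δ) (hδ2 : δ ≤ π / 2) :
    ∫ t : ℝ, fK x ((t : ℂ) + I * (δ : ℂ)) = ∫ t : ℝ, fK x ((t : ℂ) + I * ((π / 2 : ℝ) : ℂ)) := by
  have hpi := Real.pi_pos
  have hsδ : 0 < Real.sin δ := Real.sin_pos_of_pos_of_lt_pi hδ (by linarith)
  have hmono : ∀ y ∈ Set.Icc δ (π / 2), Real.sin δ ≤ Real.sin y := fun y hy =>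
    Real.sin_le_sin_of_le_of_le_pi_div_two (by linarith) hy.2 hy.1
  have i1 := intervalIntegral_tendsto_integral (fK_integrable hx hδ hsδ) tendsto_neg_atTop_atBot
    tendsto_id
  have i2 := intervalIntegral_tendsto_integral (fK_integrable hx (y := π / 2) (by linarith) (by simp))
    tendsto_neg_atTop_atBot tendsto_id
  have key : ∀ T : ℝ, (∫ t in (-T)..T, fK x ((t : ℂ) + I * (δ : ℂ))) -
      (∫ t in (-T)..T, fK x ((t : ℂ) + I * ((π / 2 : ℝ) : ℂ))) =
      I • (∫ y in δ..(π / 2), fK x (((-T : ℝ) : ℂ) + I * (y : ℂ))) -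
      I • (∫ y in δ..(π / 2), fK x ((T : ℂ) + I * (y : ℂ))) := by
    intro T
    have := Complex.integral_boundary_rect_eq_zero_of_differentiableOn (fK x)
      ((-T : ℝ) + δ * I) ((T : ℝ) + ((π / 2 : ℝ) : ℂ) * I) ?_
    · simp only [add_re, ofReal_re, mul_re, I_re, I_im, ofReal_im, add_im, mul_im, mul_zero, mul_one,
        sub_zero, add_zero, zero_add] at this
      simp only [mul_comm I]
      linear_combination this
    · intro u hu
      rw [Complex.mem_reProdIm] at hu
      have h2 := hu.2
      simp only [add_im, ofReal_im, mul_im, ofReal_re, I_im, I_re, mul_one, mul_zero, add_zero, zero_add] at h2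
      rw [Set.uIcc_of_le hδ2] at h2
      have hu' : u = (u.re : ℂ) + I * (u.im : ℂ) := by rw [mul_comm]; exact (re_add_im u).symm
      apply DifferentiableAt.differentiableWithinAt
      apply fK_differentiableAt
      rw [hu']
      exact mul_ne_zero (lin_ne (hδ.trans_le h2.1)) (sinh_ne_s2 (hsδ.trans_le (hmono _ h2)))
  obtain ⟨C, hC⟩ : ∃ C : ℝ, ∀ t : ℝ, ∀ y ∈ Set.Icc δ (π / 2),
      ‖fK x ((t : ℂ) + I * (y : ℂ))‖ ≤ C * gK x.im t := by
    refine ⟨Real.exp (2 * |x.re| * (π / 2)) / (δ * Real.sin δ), fun t y hy => ?_⟩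
    refine (fK_bound x hδ hy.1 hsδ (hmono y hy)).trans ?_
    have := gK_nonneg x.im t
    gcongr
    · exact hδ.le.trans hy.1
    · exact le_abs_self _
    · exact hy.2
  have vert : ∀ t : ℝ, ‖∫ y in δ..(π / 2), fK x ((t : ℂ) + I * (y : ℂ))‖ ≤
      C * gK x.im t * |π / 2 - δ| := by
    intro t
    apply intervalIntegral.norm_integral_le_of_norm_le_const
    intro y hy
    rw [Set.uIoc_of_le hδ2] at hy
    exact hC t y ⟨hy.1.le, hy.2⟩
  have v1 : Tendsto (fun T : ℝ => ∫ y in δ..(π / 2), fK x ((T : ℂ) + I * (y : ℂ))) atTop (𝓝 0) := by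
    refine squeeze_zero_norm vert ?_
    simpa using ((gK_tendsto hx).const_mul C).mul_const |π / 2 - δ|
  have v2 : Tendsto (fun T : ℝ => ∫ y in δ..(π / 2), fK x (((-T : ℝ) : ℂ) + I * (y : ℂ))) atTop (𝓝 0) := by
    refine squeeze_zero_norm (fun T => vert (-T)) ?_
    simp only [gK_neg]
    simpa using ((gK_tendsto (η := -x.im) (by rwa [abs_neg])).const_mul C).mul_const |π / 2 - δ|
  have lim := (i1.sub i2).congr (fun T => key T)
  have lim2 := (v2.const_smul I).sub (v1.const_smul I)
  have := tendsto_nhds_unique lim lim2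
  simp only [smul_zero, sub_zero] at this
  exact sub_eq_zero.1 this

lemma beta_int {x : ℂ} (hx : |x.im| < 1 / 2) :
    ∫ t : ℝ, Complex.exp (-2 * I * x * t) / Complex.cosh t = π / Complex.cosh (π * x) := by
  obtain ⟨h1, h2⟩ := abs_lt.1 hx
  set a : ℂ := 1 / 2 - I * x with ha
  have hare : 0 < a.re := by simp [ha]; linarith
  have hbre : 0 < (1 - a).re := by simp [ha]; linarith
  have hg := Gamma_mul_Gamma_eq_betaIntegral hare hbre
  rw [Complex.Gamma_mul_Gamma_one_sub, add_sub_cancel, Complex.Gamma_one, one_mul] at hg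
  have hsin : Complex.sin (π * a) = Complex.cosh (π * x) := by
    rw [ha, show (π : ℂ) * (1 / 2 - I * x) = π / 2 - (π * x) * I by ring, Complex.sin_pi_div_two_sub,
      Complex.cos_mul_I]
  rw [hsin] at hg
  rw [hg, betaIntegral, intervalIntegral.integral_of_le zero_le_one, integral_Ioc_eq_integral_Ioo]
  have hd : ∀ t ∈ (Set.univ : Set ℝ), HasDerivWithinAt (fun t : ℝ => Real.sigmoid (2 * t))
      (2 * (Real.sigmoid (2 * t) * (1 - Real.sigmoid (2 * t)))) Set.univ t := by
    intro t _
    have := (Real.hasDerivAt_sigmoid (2 * t)).comp t ((hasDerivAt_id t).const_mul 2)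
    refine (this.congr_deriv ?_).hasDerivWithinAt
    simp; ring
  have himg : (fun t : ℝ => Real.sigmoid (2 * t)) '' Set.univ = Set.Ioo 0 1 := by
    rw [Set.image_univ, ← Real.range_sigmoid]
    ext y; constructor
    · rintro ⟨t, rfl⟩; exact ⟨2 * t, rfl⟩
    · rintro ⟨t, rfl⟩; exact ⟨t / 2, by simp [mul_div_cancel₀]⟩
  have hinj : Set.InjOn (fun t : ℝ => Real.sigmoid (2 * t)) Set.univ := by
    intro s _ t _ h
    have := Real.sigmoid_injective h
    linarith
  rw [← himg, integral_image_eq_integral_abs_deriv_smul MeasurableSet.univ hd hinj]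
  rw [setIntegral_univ]
  congr 1
  ext t
  have hv0 := Real.sigmoid_pos (2 * t)
  have hv1 : 0 < 1 - Real.sigmoid (2 * t) := by linarith [Real.sigmoid_lt_one (2 * t)]
  have hc := Real.cosh_pos t
  have hv : Real.sigmoid (2 * t) = Real.exp (t - Real.log (2 * Real.cosh t)) := by
    rw [Real.exp_sub, Real.exp_log (by positivity), Real.sigmoid_def, Real.cosh_eq,
      show -(2 * t) = -t + -t by ring, Real.exp_add]
    have := Real.exp_pos t
    have e : Real.exp (-t) = (Real.exp t)⁻¹ := Real.exp_neg t
    rw [e]; field_simp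
  have hv' : 1 - Real.sigmoid (2 * t) = Real.exp (-t - Real.log (2 * Real.cosh t)) := by
    rw [← Real.sigmoid_neg, Real.exp_sub, Real.exp_log (by positivity), Real.sigmoid_def, Real.cosh_eq,
      show -(-(2 * t)) = t + t by ring, Real.exp_add]
    have := Real.exp_pos t
    have e : Real.exp (-t) = (Real.exp t)⁻¹ := Real.exp_neg t
    rw [e]; field_simp; ring
  rw [abs_of_pos (by positivity)]
  set L := Real.log (2 * Real.cosh t) with hL
  have hcosh : Complex.cosh t = Complex.exp L / 2 := by
    rw [← Complex.ofReal_cosh, ← Complex.ofReal_exp, hL, Real.exp_log (by positivity)]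
    push_cast; ring
  rw [show (1 : ℂ) - (Real.sigmoid (2 * t) : ℂ) = ((1 - Real.sigmoid (2 * t) : ℝ) : ℂ) by push_cast; ring]
  rw [hv', hv, hcosh]
  rw [Complex.real_smul]
  push_cast
  rw [← Complex.ofReal_sub, ← Complex.ofReal_neg, ← Complex.ofReal_sub]
  have hcp : ∀ (r : ℝ) (c : ℂ), Complex.exp (r : ℂ) ^ c = Complex.exp (r * c) := by
    intro r c
    rw [Complex.cpow_def_of_ne_zero (Complex.exp_ne_zero _), ← Complex.ofReal_exp,
      ← Complex.ofReal_log (Real.exp_pos r).le, Real.log_exp]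
  rw [hcp, hcp, div_div_eq_mul_div, mul_comm _ (2 : ℂ), mul_div_assoc, ← Complex.exp_sub, mul_assoc 2,
    ← Complex.exp_add, ← Complex.exp_add, ← Complex.exp_add]
  congr 2
  rw [ha]; push_cast; ring

lemma sinh_half (t : ℝ) : Complex.sinh ((t : ℂ) + I * ((π / 2 : ℝ) : ℂ)) = I * Complex.cosh t := by
  rw [mul_comm I, Complex.sinh_add, Complex.sinh_mul_I, Complex.cosh_mul_I]
  push_cast
  rw [Complex.sin_pi_div_two, Complex.cos_pi_div_two]
  ring

lemma cosh_ne {X : ℂ} (hX : |X.im| < 1 / 2) : Complex.cosh (π * X) ≠ 0 := by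
  intro h
  obtain ⟨h1, h2⟩ := abs_lt.1 hX
  have hp := Real.pi_pos
  have hre : (Complex.cosh (π * X)).re = Real.cosh (π * X.re) * Real.cos (π * X.im) := by
    have : (π : ℂ) * X = ((π * X.re : ℝ) : ℂ) + ((π * X.im : ℝ) : ℂ) * I := by
      conv_lhs => rw [← re_add_im X]
      push_cast; ring
    rw [this, Complex.cosh_add, Complex.sinh_mul_I, Complex.cosh_mul_I, ← Complex.ofReal_sinh,
      ← Complex.ofReal_cosh, ← Complex.ofReal_sin, ← Complex.ofReal_cos]
    simp only [add_re, mul_im, ofReal_re, ofReal_im, mul_re, I_re, I_im]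
    ring
  rw [h] at hre
  have : 0 < Real.cos (π * X.im) := Real.cos_pos_of_mem_Ioo ⟨by nlinarith, by nlinarith⟩
  have := mul_pos (Real.cosh_pos (π * X.re)) this
  simp at hre
  rcases hre with hre | hre <;> simp [hre] at this

def PhiK (x : ℂ) : ℂ := ∫ t : ℝ, fK x ((t : ℂ) + I * ((π / 2 : ℝ) : ℂ))

lemma PhiK_hasDeriv {x : ℂ} (hx : |x.im| < 1 / 2) (s₀ : ℝ) :
    HasDerivAt (fun s : ℝ => PhiK (x - s))
      (2 * Complex.exp (π * (x - s₀)) * (π / Complex.cosh (π * (x - s₀)))) s₀ := by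
  have hp := Real.pi_pos
  have him : ∀ s : ℝ, |(x - s).im| < 1 / 2 := fun s => by simpa using hx
  have hpi2 : 0 < π / 2 := by linarith
  have hs2 : 0 < Real.sin (π / 2) := by simp
  have hD := hasDerivAt_integral_of_dominated_loc_of_deriv_le (μ := volume) (𝕜 := ℝ)
    (F := fun (s : ℝ) (t : ℝ) => fK (x - s) ((t : ℂ) + I * ((π / 2 : ℝ) : ℂ)))
    (F' := fun (s : ℝ) (t : ℝ) => 2 * Complex.exp (π * (x - s)) *
      (Complex.exp (-2 * I * (x - s) * t) / Complex.cosh t))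
    (bound := fun t => 2 * Real.exp (π * (x.re - s₀ + 1)) * gK x.im t) (x₀ := s₀)
    (s := Set.Ioi (s₀ - 1)) (Ioi_mem_nhds (by linarith))
    (Eventually.of_forall fun s => (fK_continuous_line _ hpi2 hs2).aestronglyMeasurable)
    (fK_integrable (him s₀) hpi2 hs2) ?_ ?_ ((gK_integrable hx).const_mul _) ?_
  · have h := hD.2
    rw [integral_const_mul, beta_int (him s₀)] at h
    exact h
  · apply Continuous.aestronglyMeasurable
    apply Continuous.mul continuous_const
    apply Continuous.div (by fun_prop)
    · exact Complex.continuous_cosh.comp Complex.continuous_ofReal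
    · intro t; rw [← Complex.ofReal_cosh]; exact_mod_cast (Real.cosh_pos t).ne'
  · refine ae_of_all _ fun t s hs => ?_
    have hs' : s₀ - 1 < s := hs
    have e1 := norm_num_exp (x - s) t 0
    simp only [ofReal_zero, mul_zero, add_zero, Real.exp_zero, one_mul] at e1
    rw [norm_mul, norm_mul, norm_div, e1, ← Complex.ofReal_cosh, Complex.norm_real,
      Real.norm_of_nonneg (Real.cosh_pos t).le, Complex.norm_exp]
    simp only [sub_im, ofReal_im, sub_zero, mul_re, ofReal_re, sub_re, zero_mul]
    unfold gK
    have := Real.cosh_pos t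
    rw [show ‖(2 : ℂ)‖ = 2 by simp]
    gcongr
    linarith
  · refine ae_of_all _ fun t s hs => ?_
    have hu : (t : ℂ) + I * ((π / 2 : ℝ) : ℂ) ≠ 0 := lin_ne hpi2
    have hc : Complex.cosh t ≠ 0 := by
      rw [← Complex.ofReal_cosh]; exact_mod_cast (Real.cosh_pos t).ne'
    unfold fK
    rw [sinh_half]
    set u := (t : ℂ) + I * ((π / 2 : ℝ) : ℂ) with hudef
    have d0 : HasDerivAt (fun s : ℝ => -2 * I * (x - (s : ℂ)) * u) (2 * I * u) s := by
      have := (((Complex.ofRealCLM.hasDerivAt (x := s)).const_sub x).const_mul (-2 * I)).mul_const u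
      refine this.congr_deriv ?_
      simp
    refine (d0.cexp.div_const (u * (I * Complex.cosh t))).congr_deriv ?_
    have : Complex.exp (-2 * I * (x - s) * u) =
        Complex.exp (π * (x - s)) * Complex.exp (-2 * I * (x - s) * t) := by
      rw [← Complex.exp_add]; congr 1; rw [hudef]; push_cast
      linear_combination (-(x - s) * π) * I_sq
    rw [this]
    field_simp

lemma PhiK_tendsto {x : ℂ} (hx : |x.im| < 1 / 2) :
    Tendsto (fun s : ℝ => PhiK (x - s)) atTop (𝓝 0) := by
  have hp := Real.pi_pos
  refine squeeze_zero_norm (a := fun s : ℝ => Real.exp (2 * (x - s).re * (π / 2)) /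
    (π / 2 * Real.sin (π / 2)) * ∫ t, gK x.im t) (fun s => ?_) ?_
  · unfold PhiK
    rw [← integral_const_mul]
    refine norm_integral_le_of_norm_le ((gK_integrable hx).const_mul _) (ae_of_all _ fun t => ?_)
    have := fK_bound (x - s) (t := t) (y := π / 2) (δ := π / 2) (by linarith) le_rfl (by simp) le_rfl
    simpa using this
  · have h1 : Tendsto (fun s : ℝ => 2 * (x - s).re * (π / 2)) atTop atBot := by
      have : (fun s : ℝ => 2 * (x - s).re * (π / 2)) = fun s : ℝ => π * x.re + (-π) * s := by
        ext s; simp; ring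
      rw [this]
      exact tendsto_atBot_add_const_left _ _ (tendsto_id.const_mul_atTop_of_neg (by linarith))
    simpa using ((Real.tendsto_exp_atBot.comp h1).div_const (π / 2 * Real.sin (π / 2))).mul_const
      (∫ t, gK x.im t)

lemma PhiK_eq {x : ℂ} (hx : |x.im| < 1 / 2) :
    Complex.exp (PhiK x / 2) * (1 + Complex.exp (2 * π * x)) = 1 := by
  have hp := Real.pi_pos
  set k : ℝ → ℂ := fun s => Complex.exp (PhiK (x - s) / 2) * (1 + Complex.exp (2 * π * (x - s)))
    with hk
  have hd : ∀ s, HasDerivAt k 0 s := by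
    intro s
    have d1 := ((PhiK_hasDeriv hx s).div_const 2).cexp
    have d2 : HasDerivAt (fun s : ℝ => 2 * (π : ℂ) * (x - (s : ℂ))) (-(2 * π)) s := by
      have := ((Complex.ofRealCLM.hasDerivAt (x := s)).const_sub x).const_mul (2 * (π : ℂ))
      refine this.congr_deriv ?_
      simp
    refine (d1.mul (d2.cexp.const_add 1)).congr_deriv ?_
    have hc := cosh_ne (X := x - s) (by simpa using hx)
    set P : ℂ := π * (x - s) with hP
    have e2 : Complex.exp (2 * π * (x - s)) = Complex.exp P * Complex.exp P := by
      rw [← Complex.exp_add]; congr 1; rw [hP]; ring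
    have e3 : 1 + Complex.exp P * Complex.exp P = 2 * Complex.exp P * Complex.cosh P := by
      have : Complex.exp P * Complex.exp (-P) = 1 := by rw [← Complex.exp_add]; simp
      rw [Complex.cosh]
      linear_combination -this
    rw [e2, e3]
    field_simp
    ring
  have hconst : ∀ s, k s = k 0 := fun s =>
    is_const_of_deriv_eq_zero (fun s => (hd s).differentiableAt) (fun s => (hd s).deriv) s 0
  have hlim : Tendsto k atTop (𝓝 1) := by
    have h1 : Tendsto (fun s : ℝ => Complex.exp (PhiK (x - s) / 2)) atTop (𝓝 1) := by
      have := ((PhiK_tendsto hx).div_const 2).cexp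
      simpa using this
    have h2 : Tendsto (fun s : ℝ => Complex.exp (2 * π * (x - s))) atTop (𝓝 0) := by
      rw [Complex.tendsto_exp_nhds_zero_iff]
      have : (fun s : ℝ => (2 * (π : ℂ) * (x - s)).re) = fun s : ℝ => 2 * π * x.re + (-(2 * π)) * s := by
        ext s; simp; ring
      rw [this]
      exact tendsto_atBot_add_const_left _ _ (tendsto_id.const_mul_atTop_of_neg (by linarith))
    simpa using h1.mul (h2.const_add 1)
  have h0 : k 0 = 1 := by
    refine tendsto_nhds_unique ?_ hlim
    exact tendsto_const_nhds.congr fun s => (hconst s).symm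
  simpa [hk] using h0

lemma ratio_bound {σ : ℝ} (hσ : σ = 1 ∨ σ = -1) {β δ : ℝ} (hs : 0 < Real.sin (β * δ)) (s : ℝ) :
    ‖Complex.exp (σ * (β * ((s : ℂ) + I * δ))) / Complex.sinh (β * ((s : ℂ) + I * δ))‖ ≤
      2 / Real.sin (β * δ) := by
  have e : (β : ℂ) * ((s : ℂ) + I * δ) = ((β * s : ℝ) : ℂ) + I * ((β * δ : ℝ) : ℂ) := by
    push_cast; ring
  have h1 := sinh_lower_s2 (β * s) (β * δ)
  rw [abs_of_pos hs] at h1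
  have hc := Real.cosh_pos (β * s)
  rw [e, norm_div, Complex.norm_exp]
  have h2 : Real.exp ((σ : ℂ) * (((β * s : ℝ) : ℂ) + I * ((β * δ : ℝ) : ℂ))).re ≤
      2 * Real.cosh (β * s) := by
    have : ((σ : ℂ) * (((β * s : ℝ) : ℂ) + I * ((β * δ : ℝ) : ℂ))).re = σ * (β * s) := by
      simp only [add_re, mul_re, ofReal_re, ofReal_im, add_im, mul_im, I_re, I_im]; ring
    rw [this, Real.cosh_eq]
    have := Real.exp_pos (β * s)
    have := Real.exp_pos (-(β * s))
    rcases hσ with rfl | rfl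
    · rw [one_mul]; linarith
    · rw [neg_one_mul]; linarith
  calc _ ≤ 2 * Real.cosh (β * s) / (Real.sin (β * δ) * Real.cosh (β * s)) := by gcongr
    _ = _ := by field_simp

lemma eb_scaled {b δ σ : ℝ} (hb : 0 < b) (z : ℂ) (s : ℝ) :
    ebIntegrand b (b * δ) (z + σ * (I * b / 2)) (b * s) =
      (b : ℂ)⁻¹ * (fK (b * z) ((s : ℂ) + I * δ) *
        (Complex.exp (σ * (((b ^ 2 : ℝ) : ℂ) * ((s : ℂ) + I * δ))) /
          Complex.sinh (((b ^ 2 : ℝ) : ℂ) * ((s : ℂ) + I * δ)))) := by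
  have hb' : (b : ℂ) ≠ 0 := by exact_mod_cast hb.ne'
  unfold ebIntegrand fK
  have e : ((b * s : ℝ) : ℂ) + I * ((b * δ : ℝ) : ℂ) = b * ((s : ℂ) + I * δ) := by push_cast; ring
  rw [e]
  set u := (s : ℂ) + I * δ with hu
  rw [inv_mul_cancel_left₀ hb', div_mul_div_comm, ← Complex.exp_add, inv_mul_eq_div, div_div]
  congr 1
  · congr 1; push_cast; linear_combination (-(σ : ℂ) * b ^ 2 * u) * I_sq
  · rw [show (b : ℂ) * (b * u) = ((b ^ 2 : ℝ) : ℂ) * u by push_cast; ring]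
    ring

lemma eb_scaled_integrable {b δ σ : ℝ} (hb : 0 < b) (hσ : σ = 1 ∨ σ = -1) {z : ℂ}
    (hz : |((b : ℂ) * z).im| < 1 / 2) (hδ : 0 < δ) (hsδ : 0 < Real.sin δ)
    (hs : 0 < Real.sin (b ^ 2 * δ)) :
    Integrable fun s : ℝ => ebIntegrand b (b * δ) (z + σ * (I * b / 2)) (b * s) := by
  simp only [eb_scaled hb]
  apply Integrable.const_mul
  refine (fK_integrable hz hδ hsδ).mul_bdd (c := 2 / Real.sin (b ^ 2 * δ)) ?_
    (ae_of_all _ fun s => ratio_bound hσ hs s)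
  apply Continuous.aestronglyMeasurable
  apply Continuous.div (by fun_prop)
  · exact Complex.continuous_sinh.comp (by fun_prop)
  · intro s
    have e : ((b ^ 2 : ℝ) : ℂ) * ((s : ℂ) + I * δ) =
        ((b ^ 2 * s : ℝ) : ℂ) + I * ((b ^ 2 * δ : ℝ) : ℂ) := by push_cast; ring
    rw [e]
    exact sinh_ne_s2 hs

theorem shift_main {b δ : ℝ} (hb : 0 < b) {z : ℂ} (hz : |((b : ℂ) * z).im| < 1 / 2) (hδ : 0 < δ)
    (hδ2 : δ ≤ π / 2) (hβ : b ^ 2 * δ ≤ π / 2) :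
    ebE b (b * δ) (z - I * b / 2) =
      (1 + Complex.exp (2 * π * b * z)) * ebE b (b * δ) (z + I * b / 2) := by
  have hp := Real.pi_pos
  have hsδ : 0 < Real.sin δ := Real.sin_pos_of_pos_of_lt_pi hδ (by linarith)
  have hs : 0 < Real.sin (b ^ 2 * δ) := Real.sin_pos_of_pos_of_lt_pi (by positivity) (by linarith)
  have hb' : (b : ℂ) ≠ 0 := by exact_mod_cast hb.ne'
  have hm := eb_scaled_integrable hb (Or.inr rfl) hz hδ hsδ hs
  have hpl := eb_scaled_integrable hb (Or.inl rfl) hz hδ hsδ hs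
  have hdiff : (∫ s : ℝ, ebIntegrand b (b * δ) (z + ((-1 : ℝ) : ℂ) * (I * b / 2)) (b * s)) -
      (∫ s : ℝ, ebIntegrand b (b * δ) (z + ((1 : ℝ) : ℂ) * (I * b / 2)) (b * s)) =
      (b : ℂ)⁻¹ * (-2 * PhiK (b * z)) := by
    rw [← integral_sub hm hpl, PhiK, ← shift hz hδ hδ2, ← integral_const_mul, ← integral_const_mul]
    congr 1
    ext s
    rw [eb_scaled hb, eb_scaled hb]
    have e : ((b ^ 2 : ℝ) : ℂ) * ((s : ℂ) + I * δ) =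
        ((b ^ 2 * s : ℝ) : ℂ) + I * ((b ^ 2 * δ : ℝ) : ℂ) := by push_cast; ring
    have hne := sinh_ne_s2 (t := b ^ 2 * s) hs
    rw [← e] at hne
    set v := ((b ^ 2 : ℝ) : ℂ) * ((s : ℂ) + I * δ) with hv
    rw [← mul_sub, ← mul_sub, ← sub_div]
    have : Complex.exp (((-1 : ℝ) : ℂ) * v) - Complex.exp (((1 : ℝ) : ℂ) * v) = -2 * Complex.sinh v := by
      rw [Complex.sinh]; push_cast; rw [neg_one_mul, one_mul]; ring
    rw [this, mul_div_assoc, div_self hne]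
    ring
  rw [Measure.integral_comp_mul_left (fun t => ebIntegrand b (b * δ) _ t),
    Measure.integral_comp_mul_left (fun t => ebIntegrand b (b * δ) _ t),
    abs_of_pos (inv_pos.2 hb), Complex.real_smul, Complex.real_smul, ← mul_sub, ofReal_inv] at hdiff
  have hdiff := mul_left_cancel₀ (inv_ne_zero hb') hdiff
  rw [show z + ((-1 : ℝ) : ℂ) * (I * b / 2) = z - I * b / 2 by push_cast; ring,
    show z + ((1 : ℝ) : ℂ) * (I * b / 2) = z + I * b / 2 by push_cast; ring] at hdiff
  have hP := PhiK_eq hz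
  unfold ebE
  rw [sub_eq_iff_eq_add.1 hdiff, mul_add, Complex.exp_add]
  congr 1
  rw [show (1 / 4 : ℂ) * (-2 * PhiK (b * z)) = -(PhiK (b * z) / 2) by ring, Complex.exp_neg,
    show 2 * (π : ℂ) * b * z = 2 * π * (b * z) by ring]
  exact inv_eq_of_mul_eq_one_right hP

/-- the `b`-shift equation
`e_b(z − ib/2) = (1 + e^{2πbz})·e_b(z + ib/2)` on the strip `|Im z| < 1/(2b)`. -/
theorem statement2 (b : ℝ) (hb : 0 < b) (z : ℂ) (hz : |z.im| < 1 / (2 * b)) :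
    eb b (z - Complex.I * (b : ℂ) / 2) =
      (1 + Complex.exp (2 * (π : ℂ) * (b : ℂ) * z)) * eb b (z + Complex.I * (b : ℂ) / 2) := by
  have hp := Real.pi_pos
  have hbi : 0 < b⁻¹ := inv_pos.2 hb
  have hmin : 0 < min b b⁻¹ := lt_min hb hbi
  have e : π * min b b⁻¹ / 2 = b * (π * min b b⁻¹ / 2 * b⁻¹) := by field_simp
  unfold eb
  rw [e]
  apply shift_main hb
  · rw [Complex.im_ofReal_mul, abs_mul, abs_of_pos hb]
    calc b * |z.im| < b * (1 / (2 * b)) := mul_lt_mul_of_pos_left hz hb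
      _ = 1 / 2 := by field_simp
  · positivity
  · have : min b b⁻¹ * b⁻¹ ≤ b * b⁻¹ := mul_le_mul_of_nonneg_right (min_le_left _ _) hbi.le
    rw [mul_inv_cancel₀ hb.ne'] at this
    nlinarith
  · have : min b b⁻¹ * b ≤ b⁻¹ * b := mul_le_mul_of_nonneg_right (min_le_right _ _) hb.le
    rw [inv_mul_cancel₀ hb.ne'] at this
    have e2 : b ^ 2 * (π * min b b⁻¹ / 2 * b⁻¹) = π * (min b b⁻¹ * b) / 2 := by field_simp
    rw [e2]
    nlinarith

end
end

section
/- Let b > 0 be real. For every z ∈ ℂ with |Im z| < b/2 one has e_b(z − ib⁻¹/2) = (1 + e^{2πb⁻¹z})·e_b(z + ib⁻¹/2), where both sides are given directly by the integral representation of e_b (both arguments lie in the strip |Im z| < (b+b⁻¹)/2). -/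
open MeasureTheory Complex Real Filter Topology

noncomputable section

lemma aux_sinh_re_im (a t ε : ℝ) :
    Complex.sinh ((a : ℂ) * ((t : ℂ) + Complex.I * (ε : ℂ))) =
      ((Real.sinh (a * t) * Real.cos (a * ε) : ℝ) : ℂ) +
        ((Real.cosh (a * t) * Real.sin (a * ε) : ℝ) : ℂ) * Complex.I := by
  have : (a : ℂ) * ((t : ℂ) + Complex.I * (ε : ℂ)) =
      ((a * t : ℝ) : ℂ) + ((a * ε : ℝ) : ℂ) * Complex.I := by push_cast; ring
  rw [this, Complex.sinh_add, Complex.sinh_mul_I, Complex.cosh_mul_I]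
  push_cast
  ring

lemma aux_sinh_sq (a t ε : ℝ) :
    ‖Complex.sinh ((a : ℂ) * ((t : ℂ) + Complex.I * (ε : ℂ)))‖ ^ 2 =
      Real.sinh (a * t) ^ 2 + Real.sin (a * ε) ^ 2 := by
  rw [aux_sinh_re_im, ← Complex.normSq_eq_norm_sq, Complex.normSq_add_mul_I]
  have h1 := Real.cosh_sq (a * t)
  have h2 := Real.sin_sq_add_cos_sq (a * ε)
  have h3 : Real.cos (a * ε) ^ 2 = 1 - Real.sin (a * ε) ^ 2 := by linarith
  rw [mul_pow, mul_pow, h1, h3]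
  ring

lemma aux_sinh_lower (a : ℝ) (ε : ℝ) (t : ℝ) (hs : 0 < Real.sin (a * ε)) (ha : 0 < a) :
    Real.sin (a * ε) / 2 * Real.exp (a * |t|) ≤
      ‖Complex.sinh ((a : ℂ) * ((t : ℂ) + Complex.I * (ε : ℂ)))‖ := by
  have h1 : Real.sin (a * ε) * Real.cosh (a * t) ≤
      ‖Complex.sinh ((a : ℂ) * ((t : ℂ) + Complex.I * (ε : ℂ)))‖ := by
    refine (sq_le_sq₀ (by positivity) (norm_nonneg _)).1 ?_
    rw [aux_sinh_sq, mul_pow, Real.cosh_sq]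
    nlinarith [Real.sin_sq_le_one (a * ε), sq_nonneg (Real.sinh (a * t))]
  have h2 : Real.exp (a * |t|) / 2 ≤ Real.cosh (a * t) := by
    rw [← Real.cosh_abs, abs_mul, abs_of_pos ha, Real.cosh_eq]
    have := Real.exp_pos (-(a * |t|))
    linarith
  nlinarith

lemma aux_sinh_ne_s3 (a : ℝ) (ε : ℝ) (t : ℝ) (hs : 0 < Real.sin (a * ε)) :
    Complex.sinh ((a : ℂ) * ((t : ℂ) + Complex.I * (ε : ℂ))) ≠ 0 := by
  intro h
  have := aux_sinh_sq a t ε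
  rw [h] at this
  simp at this
  nlinarith [sq_nonneg (Real.sinh (a * t))]

lemma aux_int_exp (a : ℝ) (ha : 0 < a) : Integrable (fun t : ℝ => Real.exp (-a * |t|)) := by
  rw [← integrableOn_univ, ← Set.Iic_union_Ioi (a := (0 : ℝ))]
  apply IntegrableOn.union
  · refine (integrableOn_exp_mul_Iic ha 0).congr_fun ?_ measurableSet_Iic
    intro t ht
    simp only [abs_of_nonpos (Set.mem_Iic.1 ht)]
    ring_nf
  · refine (integrableOn_exp_mul_Ioi (a := -a) (by linarith) 0).congr_fun ?_ measurableSet_Ioi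
    intro t ht
    simp only [abs_of_pos (Set.mem_Ioi.1 ht)]

lemma aux_w_ne (ε : ℝ) (hε : 0 < ε) (t : ℝ) : (t : ℂ) + Complex.I * (ε : ℂ) ≠ 0 := by
  intro h
  have := congrArg Complex.im h
  simp at this
  linarith

lemma aux_w_norm (ε : ℝ) (t : ℝ) : ε ≤ ‖(t : ℂ) + Complex.I * (ε : ℂ)‖ := by
  have := Complex.abs_im_le_norm ((t : ℂ) + Complex.I * (ε : ℂ))
  simp at this
  exact (le_abs_self _).trans this

/-- integrability of the one-`sinh` integrand -/
lemma aux_int_one (b ε : ℝ) (hb : 0 < b) (hs : 0 < Real.sin (b * ε))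
    (z : ℂ) (hz : |z.im| < b / 2) :
    Integrable (fun t : ℝ => Complex.exp (-2 * Complex.I * z * ((t : ℂ) + Complex.I * (ε : ℂ))) /
      Complex.sinh ((b : ℂ) * ((t : ℂ) + Complex.I * (ε : ℂ)))) := by
  have hd : 0 < b - 2 * |z.im| := by linarith
  refine ((aux_int_exp _ hd).const_mul
    (Real.exp (2 * (z.re * ε)) / (Real.sin (b * ε) / 2))).mono' ?_ ?_
  · apply Continuous.aestronglyMeasurable
    apply Continuous.div (by fun_prop) (by fun_prop)
    intro t
    exact aux_sinh_ne_s3 b ε t hs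
  · refine Eventually.of_forall fun t => ?_
    rw [norm_div, aux_norm_exp]
    have h1 := aux_sinh_lower b ε t hs hb
    have h2 : 2 * (z.re * ε + z.im * t) ≤ 2 * (z.re * ε) + 2 * |z.im| * |t| := by
      have := le_abs_self (z.im * t)
      rw [abs_mul] at this
      linarith
    calc _ ≤ Real.exp (2 * (z.re * ε) + 2 * |z.im| * |t|) /
          (Real.sin (b * ε) / 2 * Real.exp (b * |t|)) := by gcongr
      _ = _ := by
        rw [Real.exp_add, show -(b - 2 * |z.im|) * |t| = 2 * |z.im| * |t| - b * |t| by ring,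
          Real.exp_sub]
        field_simp

lemma aux_int_eb (b ε : ℝ) (hb : 0 < b) (hε : 0 < ε) (hs : 0 < Real.sin (b * ε))
    (hs' : 0 < Real.sin (b⁻¹ * ε))
    (z : ℂ) (hz : |z.im| < (b + b⁻¹) / 2) :
    Integrable (ebIntegrand b ε z) := by
  have hd : 0 < b + b⁻¹ - 2 * |z.im| := by linarith
  have hb' : 0 < b⁻¹ := inv_pos.2 hb
  have hne' : ∀ t : ℝ, Complex.sinh ((b : ℂ)⁻¹ * ((t : ℂ) + Complex.I * (ε : ℂ))) ≠ 0 := by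
    intro t
    have := aux_sinh_ne_s3 b⁻¹ ε t hs'
    simpa using this
  refine ((aux_int_exp _ hd).const_mul
    (Real.exp (2 * (z.re * ε)) / (ε * (Real.sin (b * ε) / 2) * (Real.sin (b⁻¹ * ε) / 2)))).mono'
    ?_ ?_
  · apply Continuous.aestronglyMeasurable
    unfold ebIntegrand
    apply Continuous.div (by fun_prop) (by fun_prop)
    intro t
    exact mul_ne_zero (mul_ne_zero (aux_w_ne ε hε t) (aux_sinh_ne_s3 b ε t hs)) (hne' t)
  · refine Eventually.of_forall fun t => ?_
    unfold ebIntegrand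
    rw [norm_div, aux_norm_exp, norm_mul, norm_mul]
    have h1 := aux_sinh_lower b ε t hs hb
    have h1' := aux_sinh_lower b⁻¹ ε t hs' hb'
    rw [Complex.ofReal_inv] at h1'
    have h0 := aux_w_norm ε t
    have h2 : 2 * (z.re * ε + z.im * t) ≤ 2 * (z.re * ε) + 2 * |z.im| * |t| := by
      have := le_abs_self (z.im * t)
      rw [abs_mul] at this
      linarith
    calc _ ≤ Real.exp (2 * (z.re * ε) + 2 * |z.im| * |t|) /
          (ε * (Real.sin (b * ε) / 2 * Real.exp (b * |t|)) *
            (Real.sin (b⁻¹ * ε) / 2 * Real.exp (b⁻¹ * |t|))) := by gcongr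
      _ = _ := by
        rw [Real.exp_add, show -(b + b⁻¹ - 2 * |z.im|) * |t| =
          2 * |z.im| * |t| - (b * |t| + b⁻¹ * |t|) by ring,
          Real.exp_sub, Real.exp_add]
        field_simp

lemma aux_G0 (b ε : ℝ) (hb : 0 < b) (hs : 0 < Real.sin (b * ε)) :
    ∫ t : ℝ, 1 / Complex.sinh ((b : ℂ) * ((t : ℂ) + Complex.I * (ε : ℂ))) =
      -(π * Complex.I) / b := by
  have hbc : (b : ℂ) ≠ 0 := by exact_mod_cast hb.ne'
  set E : ℝ → ℂ := fun t => Complex.exp ((b : ℂ) * ((t : ℂ) + Complex.I * (ε : ℂ))) with hE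
  have hEim : ∀ t, 0 < (E t).im := by
    intro t
    simp only [hE, Complex.exp_im]
    have : ((b : ℂ) * ((t : ℂ) + Complex.I * (ε : ℂ))).im = b * ε := by simp
    rw [this]
    positivity
  have hE1 : ∀ t, E t + 1 ≠ 0 := by
    intro t h
    have := congrArg Complex.im h
    simp at this
    linarith [hEim t]
  have hE2 : ∀ t, E t - 1 ≠ 0 := by
    intro t h
    have := congrArg Complex.im h
    simp at this
    linarith [hEim t]
  have hE0 : ∀ t, E t ≠ 0 := fun t => Complex.exp_ne_zero _
  set q : ℝ → ℂ := fun t => -Complex.I * ((E t - 1) / (E t + 1)) with hq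
  have hqre : ∀ t, 0 < (q t).re := by
    intro t
    have : q t = -Complex.I * ((E t - 1) * (starRingEnd ℂ) (E t + 1)) /
        (Complex.normSq (E t + 1) : ℂ) := by
      rw [Complex.normSq_eq_conj_mul_self]
      have h3 : (starRingEnd ℂ) (E t + 1) ≠ 0 := (map_ne_zero _).2 (hE1 t)
      have := hE1 t
      simp only [hq]
      field_simp
    rw [this, Complex.div_ofReal_re]
    apply div_pos _ (Complex.normSq_pos.2 (hE1 t))
    have := hEim t
    simp
    nlinarith
  have hEd : ∀ t, HasDerivAt E (E t * b) t := by
    intro t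
    have h1 : HasDerivAt (fun t : ℝ => (b : ℂ) * ((t : ℂ) + Complex.I * (ε : ℂ))) (b : ℂ) t := by
      have := ((Complex.ofRealCLM.hasDerivAt (x := t)).add_const
        (Complex.I * (ε : ℂ))).const_mul (b : ℂ)
      simpa using this
    exact h1.cexp
  have hderiv : ∀ t : ℝ, HasDerivAt (fun t => Complex.log (q t) / b)
      (1 / Complex.sinh ((b : ℂ) * ((t : ℂ) + Complex.I * (ε : ℂ)))) t := by
    intro t
    have h1 := (((hEd t).sub_const 1).div ((hEd t).add_const 1) (hE1 t)).const_mul (-Complex.I)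
    have h2 := (h1.clog_real (Or.inl (hqre t))).div_const (b : ℂ)
    refine HasDerivAt.congr_deriv (f := fun t => Complex.log (q t) / b) h2 ?_
    simp only [Pi.div_apply]
    have h3 : Complex.sinh ((b : ℂ) * ((t : ℂ) + Complex.I * (ε : ℂ))) =
        (E t - (E t)⁻¹) / 2 := by
      rw [Complex.sinh, Complex.exp_neg]
    rw [h3]
    have := hE1 t
    have := hE2 t
    have := hE0 t
    have h5 : E t - (E t)⁻¹ = (E t - 1) * (E t + 1) / E t := by field_simp; ring
    rw [h5]
    field_simp
    ring
  have hbot : Tendsto E atBot (𝓝 0) := by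
    rw [tendsto_zero_iff_norm_tendsto_zero]
    have : (fun t => ‖E t‖) = fun t => Real.exp (b * t) := by
      ext t; simp [hE, Complex.norm_exp]
    rw [this]
    exact Real.tendsto_exp_atBot.comp (tendsto_id.const_mul_atBot hb)
  have htop : Tendsto (fun t => (E t)⁻¹) atTop (𝓝 0) := by
    rw [tendsto_zero_iff_norm_tendsto_zero]
    have : (fun t => ‖(E t)⁻¹‖) = fun t => Real.exp (-(b * t)) := by
      ext t; simp [hE, Complex.norm_exp, Real.exp_neg]
    rw [this]
    exact Real.tendsto_exp_neg_atTop_nhds_zero.comp (tendsto_id.const_mul_atTop hb)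
  have hqbot : Tendsto q atBot (𝓝 Complex.I) := by
    have : Tendsto q atBot (𝓝 (-Complex.I * ((0 - 1) / (0 + 1)))) :=
      ((hbot.sub_const 1).div (hbot.add_const 1) (by simp)).const_mul _
    simpa using this
  have hqtop : Tendsto q atTop (𝓝 (-Complex.I)) := by
    have : Tendsto (fun t => -Complex.I * ((1 - (E t)⁻¹) / (1 + (E t)⁻¹))) atTop
        (𝓝 (-Complex.I * ((1 - 0) / (1 + 0)))) :=
      ((htop.const_sub 1).div (htop.const_add 1) (by simp)).const_mul _
    have h2 : q = (fun t => -Complex.I * ((1 - (E t)⁻¹) / (1 + (E t)⁻¹))) := by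
      ext t
      have := hE1 t
      have h4 := hE0 t
      have : 1 + (E t)⁻¹ ≠ 0 := by
        intro h
        apply this
        field_simp at h
        simpa using h
      simp only [hq]
      congr 1
      rw [div_eq_div_iff (hE1 t) this]
      field_simp
      try ring
    rw [h2]
    simpa using this
  have hgint := aux_int_one b ε hb hs 0 (by simpa using hb)
  simp only [mul_zero, zero_mul, Complex.exp_zero] at hgint
  rw [integral_of_hasDerivAt_of_tendsto hderiv hgint
    ((hqbot.clog (by simp [Complex.slitPlane])).div_const _)
    ((hqtop.clog (by simp [Complex.slitPlane])).div_const _)]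
  rw [Complex.log_I, Complex.log_neg_I]
  field_simp
  ring

lemma aux_shift (f : ℂ → ℂ) (y1 y2 : ℝ) (hle : y1 ≤ y2)
    (hf : ∀ w : ℂ, y1 ≤ w.im → w.im ≤ y2 → DifferentiableAt ℂ f w)
    (i1 : Integrable fun t : ℝ => f (t + y1 * Complex.I))
    (i2 : Integrable fun t : ℝ => f (t + y2 * Complex.I))
    (B : ℝ → ℝ) (hB : Tendsto B atTop (𝓝 0))
    (hbd : ∀ᶠ R in atTop, ∀ y, y1 ≤ y → y ≤ y2 →
      ‖f ((R : ℝ) + y * Complex.I)‖ ≤ B R ∧ ‖f ((-R : ℝ) + y * Complex.I)‖ ≤ B R) :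
    ∫ t : ℝ, f (t + y1 * Complex.I) = ∫ t : ℝ, f (t + y2 * Complex.I) := by
  have t1 := intervalIntegral_tendsto_integral i1 tendsto_neg_atTop_atBot tendsto_id
  have t2 := intervalIntegral_tendsto_integral i2 tendsto_neg_atTop_atBot tendsto_id
  have t3 := t1.sub t2
  have hz : Tendsto (fun R : ℝ => (∫ x : ℝ in (-R)..(id R), f (x + y1 * Complex.I)) -
      ∫ x : ℝ in (-R)..(id R), f (x + y2 * Complex.I)) atTop (𝓝 0) := by
    have hB2 : Tendsto (fun R => 2 * (B R * |y2 - y1|)) atTop (𝓝 0) := by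
      simpa using (hB.mul_const |y2 - y1|).const_mul 2
    refine squeeze_zero_norm' ?_ hB2
    filter_upwards [hbd] with R hR
    have h := Complex.integral_boundary_rect_eq_zero_of_differentiableOn f
      ((-R : ℝ) + y1 * Complex.I) ((R : ℝ) + y2 * Complex.I) (by
        intro w hw
        refine (hf w ?_ ?_).differentiableWithinAt
        · have := hw.2
          simp [Set.uIcc_of_le hle] at this
          exact this.1
        · have := hw.2
          simp [Set.uIcc_of_le hle] at this
          exact this.2)
    simp only [Complex.add_re, Complex.add_im, Complex.ofReal_re, Complex.ofReal_im,
      Complex.mul_re, Complex.mul_im, Complex.I_re, Complex.I_im, mul_zero, mul_one, sub_zero,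
      add_zero, zero_add] at h
    have hn1 := intervalIntegral.norm_integral_le_of_norm_le_const (a := y1) (b := y2) (C := B R)
      (f := fun y : ℝ => f ((R : ℝ) + y * Complex.I)) (by
        intro y hy
        rw [Set.uIoc_of_le hle] at hy
        exact (hR y hy.1.le hy.2).1)
    have hn2 := intervalIntegral.norm_integral_le_of_norm_le_const (a := y1) (b := y2) (C := B R)
      (f := fun y : ℝ => f ((-R : ℝ) + y * Complex.I)) (by
        intro y hy
        rw [Set.uIoc_of_le hle] at hy
        exact (hR y hy.1.le hy.2).2)
    have h' : (∫ x : ℝ in (-R)..(id R), f (x + y1 * Complex.I)) -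
      ∫ x : ℝ in (-R)..(id R), f (x + y2 * Complex.I) =
      Complex.I • (∫ y : ℝ in y1..y2, f ((-R : ℝ) + y * Complex.I)) -
      Complex.I • (∫ y : ℝ in y1..y2, f ((R : ℝ) + y * Complex.I)) := by
      simp only [id]
      linear_combination h
    rw [h']
    refine (norm_sub_le _ _).trans ?_
    rw [norm_smul, norm_smul, Complex.norm_I, one_mul, one_mul]
    linarith
  have := tendsto_nhds_unique t3 hz
  exact sub_eq_zero.1 this

lemma aux_sinh_ne' (b : ℝ) (hb : 0 < b) (w : ℂ) (hw : w ≠ 0) (h1 : |b * w.im| < π) :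
    Complex.sinh (b * w) ≠ 0 := by
  intro h
  have hw' : w = (w.re : ℂ) + Complex.I * (w.im : ℂ) := by
    rw [mul_comm, Complex.re_add_im]
  have := aux_sinh_sq b w.re w.im
  rw [← hw', h] at this
  simp at this
  have e1 : Real.sinh (b * w.re) = 0 := by
    nlinarith [sq_nonneg (Real.sinh (b * w.re)), sq_nonneg (Real.sin (b * w.im))]
  have e2 : Real.sin (b * w.im) = 0 := by
    nlinarith [sq_nonneg (Real.sinh (b * w.re)), sq_nonneg (Real.sin (b * w.im))]
  rw [Real.sinh_eq_zero] at e1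
  rw [abs_lt] at h1
  rw [Real.sin_eq_zero_iff_of_lt_of_lt h1.1 h1.2] at e2
  apply hw
  rw [hw']
  have e1' : w.re = 0 := by simpa [hb.ne'] using e1
  have e2' : w.im = 0 := by simpa [hb.ne'] using e2
  simp [e1', e2']

lemma aux_G (b ε : ℝ) (hb : 0 < b) (hε : 0 < ε) (hbε : b * ε < π)
    (z : ℂ) (hz : |z.im| < b / 2) :
    (1 + Complex.exp (-(2 * π * z / b))) *
    ∫ t : ℝ, Complex.exp (-2 * Complex.I * z * ((t : ℂ) + Complex.I * (ε : ℂ))) /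
      Complex.sinh ((b : ℂ) * ((t : ℂ) + Complex.I * (ε : ℂ))) =
      -(2 * π * Complex.I) / b := by
  have hs : 0 < Real.sin (b * ε) := Real.sin_pos_of_pos_of_lt_pi (by positivity) hbε
  have hbc : (b : ℂ) ≠ 0 := by exact_mod_cast hb.ne'
  have hG0 := aux_G0 b ε hb hs
  have ih := aux_int_one b ε hb hs z hz
  have ig := aux_int_one b ε hb hs 0 (by simpa using hb)
  simp only [mul_zero, zero_mul, Complex.exp_zero] at ig
  set h : ℝ → ℂ := fun t : ℝ =>
    Complex.exp (-2 * Complex.I * z * ((t : ℂ) + Complex.I * (ε : ℂ))) /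
      Complex.sinh ((b : ℂ) * ((t : ℂ) + Complex.I * (ε : ℂ))) with hh
  set g : ℝ → ℂ := fun t : ℝ =>
    1 / Complex.sinh ((b : ℂ) * ((t : ℂ) + Complex.I * (ε : ℂ))) with hg
  set n : ℂ → ℂ := fun w => Complex.exp (-2 * Complex.I * z * w) with hn
  set d : ℂ → ℂ := fun w => Complex.sinh (b * w) with hd
  have dn : Differentiable ℂ (dslope n 0) := by
    rw [← differentiableOn_univ, Complex.differentiableOn_dslope Filter.univ_mem,
      differentiableOn_univ]
    fun_prop
  have dd : Differentiable ℂ (dslope d 0) := by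
    rw [← differentiableOn_univ, Complex.differentiableOn_dslope Filter.univ_mem,
      differentiableOn_univ]
    fun_prop
  set f : ℂ → ℂ := fun w => dslope n 0 w / dslope d 0 w with hf
  have fval : ∀ w, w ≠ 0 → f w = (n w - 1) / d w := by
    intro w hw
    simp only [hf, dslope_of_ne _ hw, slope, vsub_eq_sub, sub_zero, smul_eq_mul]
    rw [mul_div_mul_left _ _ (inv_ne_zero hw)]
    simp [hn, hd]
  set y1 : ℝ := ε - π / b with hy1
  have hy1n : y1 < 0 := by
    rw [hy1, sub_neg, lt_div_iff₀ hb]; linarith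
  have hle : y1 ≤ ε := by linarith
  have e2 : ∀ t : ℝ, f (t + ε * Complex.I) = h t - g t := by
    intro t
    have := aux_w_ne ε hε t
    rw [mul_comm (ε : ℂ) Complex.I, fval _ this]
    simp only [hn, hd, hh, hg]
    rw [sub_div]
  have e1 : ∀ t : ℝ, f (t + y1 * Complex.I) = g t - Complex.exp (-(2 * π * z / b)) * h t := by
    intro t
    have hne : (t : ℂ) + y1 * Complex.I ≠ 0 := by
      intro hc
      have := congrArg Complex.im hc
      simp at this
      linarith
    rw [fval _ hne]
    simp only [hn, hd, hh, hg]
    have s1 : Complex.sinh ((b : ℂ) * ((t : ℂ) + y1 * Complex.I)) =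
        -Complex.sinh ((b : ℂ) * ((t : ℂ) + Complex.I * (ε : ℂ))) := by
      rw [← Complex.sinh_sub_pi_mul_I]
      congr 1
      rw [hy1]
      push_cast
      field_simp
      ring
    have s2 : Complex.exp (-2 * Complex.I * z * ((t : ℂ) + y1 * Complex.I)) =
        Complex.exp (-(2 * π * z / b)) *
          Complex.exp (-2 * Complex.I * z * ((t : ℂ) + Complex.I * (ε : ℂ))) := by
      rw [← Complex.exp_add]
      congr 1
      rw [hy1]
      push_cast
      field_simp
      ring_nf
      simp only [Complex.I_sq]
      ring
    rw [s1, s2]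
    have := aux_sinh_ne_s3 b ε t hs
    field_simp
    ring
  have key : ∫ t : ℝ, f (t + y1 * Complex.I) = ∫ t : ℝ, f (t + ε * Complex.I) := by
    set M : ℝ := |y1| + |ε| with hM
    set K : ℝ := Real.exp (2 * (|z.re| * M)) with hK
    refine aux_shift f y1 ε hle ?_ ?_ ?_
      (fun R => 4 * K * Real.exp (-((b - 2 * |z.im|) * R)) + 4 * Real.exp (-(b * R))) ?_ ?_
    · intro w hw1 hw2
      refine (dn w).div (dd w) ?_
      by_cases hw : w = 0
      · rw [hw, dslope_same]
        have : HasDerivAt d ((b : ℂ)) 0 := by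
          have := ((hasDerivAt_id (0 : ℂ)).const_mul (b : ℂ)).csinh
          simpa using this
        rw [this.deriv]
        exact hbc
      · rw [dslope_of_ne _ hw, slope]
        simp only [vsub_eq_sub, sub_zero, smul_eq_mul]
        refine mul_ne_zero (inv_ne_zero hw) ?_
        have : d 0 = 0 := by simp [hd]
        rw [this, sub_zero]
        refine aux_sinh_ne' b hb w hw ?_
        rw [abs_lt]
        constructor
        · have h3 : b * y1 ≤ b * w.im := by gcongr
          have h4 : b * y1 = b * ε - π := by rw [hy1]; field_simp
          have : 0 < b * ε := by positivity
          linarith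
        · have h3 : b * w.im ≤ b * ε := by gcongr
          linarith
    · simp only [e1]
      exact ig.sub (ih.const_mul _)
    · simp only [e2]
      exact ih.sub ig
    · have u1 : Tendsto (fun R : ℝ => Real.exp (-((b - 2 * |z.im|) * R))) atTop (𝓝 0) :=
        Real.tendsto_exp_neg_atTop_nhds_zero.comp
          (tendsto_id.const_mul_atTop (by linarith))
      have u2 : Tendsto (fun R : ℝ => Real.exp (-(b * R))) atTop (𝓝 0) :=
        Real.tendsto_exp_neg_atTop_nhds_zero.comp
          (tendsto_id.const_mul_atTop hb)
      simpa using (u1.const_mul (4 * K)).add (u2.const_mul 4)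
    · have hbig : ∀ᶠ R : ℝ in atTop, 1 ≤ b * R :=
        (tendsto_id.const_mul_atTop hb).eventually_ge_atTop 1
      filter_upwards [hbig, eventually_gt_atTop 0] with R hR hR0 y hy1' hy2'
      have main : ∀ t : ℝ, |t| = R → ‖f ((t : ℝ) + y * Complex.I)‖ ≤
          4 * K * Real.exp (-((b - 2 * |z.im|) * R)) + 4 * Real.exp (-(b * R)) := by
        intro t ht
        have hne : (t : ℂ) + y * Complex.I ≠ 0 := by
          intro hc
          have := congrArg Complex.re hc
          simp at this
          rw [this] at ht
          simp at ht
          linarith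
        rw [fval _ hne, mul_comm (y : ℂ) Complex.I, norm_div]
        have hden : Real.exp (b * R) / 4 ≤ ‖d (t + Complex.I * y)‖ := by
          have h5 : Real.sinh (b * R) ≤ ‖d (t + Complex.I * y)‖ := by
            refine le_of_sq_le_sq ?_ (norm_nonneg _)
            simp only [hd]
            rw [aux_sinh_sq, ← ht, ← abs_of_pos hb, ← abs_mul, abs_of_pos hb, ← Real.abs_sinh,
              sq_abs]
            nlinarith [sq_nonneg (Real.sin (b * y))]
          refine le_trans ?_ h5
          rw [Real.sinh_eq]
          have h6 : 2 ≤ Real.exp (b * R) := by linarith [Real.add_one_le_exp (b * R)]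
          have h7 : Real.exp (-(b * R)) ≤ 1 := by
            rw [Real.exp_le_one_iff]; linarith
          linarith
        have hnum : ‖n (t + Complex.I * y) - 1‖ ≤ K * Real.exp (2 * |z.im| * R) + 1 := by
          refine (norm_sub_le _ _).trans ?_
          rw [norm_one]
          simp only [hn]
          rw [aux_norm_exp, hK, ← Real.exp_add]
          gcongr
          have h8 := le_abs_self (z.re * y)
          have h9 := le_abs_self (z.im * t)
          rw [abs_mul] at h8 h9
          rw [ht] at h9
          have h10 : |y| ≤ M := by
            rw [hM, abs_le]
            constructor
            · linarith [neg_abs_le y1, abs_nonneg ε]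
            · linarith [le_abs_self ε, abs_nonneg y1]
          have h11 : |z.re| * |y| ≤ |z.re| * M := by gcongr
          linarith
        calc _ ≤ (K * Real.exp (2 * |z.im| * R) + 1) / (Real.exp (b * R) / 4) := by gcongr
          _ = _ := by
            rw [show -((b - 2 * |z.im|) * R) = 2 * |z.im| * R - b * R by ring, Real.exp_sub,
              Real.exp_neg]
            field_simp
      refine ⟨main R (abs_of_pos hR0), main (-R) (by rw [abs_neg, abs_of_pos hR0])⟩
  simp only [e1, e2] at key
  rw [integral_sub ig (ih.const_mul _), integral_sub ih ig, integral_const_mul, hG0] at key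
  linear_combination (norm := (field_simp; try ring)) -key

/-- integrability of the integrand with `1/(w sinh (b w))` -/
lemma aux_int_two (b ε : ℝ) (hb : 0 < b) (hε : 0 < ε) (hs : 0 < Real.sin (b * ε))
    (z : ℂ) (hz : |z.im| < b / 2) :
    Integrable (fun t : ℝ => Complex.exp (-2 * Complex.I * z * ((t : ℂ) + Complex.I * (ε : ℂ))) /
      (((t : ℂ) + Complex.I * (ε : ℂ)) *
        Complex.sinh ((b : ℂ) * ((t : ℂ) + Complex.I * (ε : ℂ))))) := by
  refine ((aux_int_one b ε hb hs z hz).norm.const_mul ε⁻¹).mono' ?_ ?_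
  · apply Continuous.aestronglyMeasurable
    apply Continuous.div (by fun_prop) (by fun_prop)
    intro t
    exact mul_ne_zero (aux_w_ne ε hε t) (aux_sinh_ne_s3 b ε t hs)
  · refine Eventually.of_forall fun t => ?_
    have h0 := aux_w_norm ε t
    rw [mul_comm ((t : ℂ) + Complex.I * (ε : ℂ)) (Complex.sinh _), ← div_div, norm_div,
      div_eq_inv_mul]
    gcongr

lemma aux_F_deriv (b ε : ℝ) (hb : 0 < b) (hε : 0 < ε) (hs : 0 < Real.sin (b * ε))
    (y : ℝ) (hy : |y| < b / 2) (x : ℝ) :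
    HasDerivAt (fun x : ℝ => ∫ t : ℝ,
      Complex.exp (-2 * Complex.I * ((x : ℂ) + y * Complex.I) * ((t : ℂ) + Complex.I * (ε : ℂ))) /
      (((t : ℂ) + Complex.I * (ε : ℂ)) *
        Complex.sinh ((b : ℂ) * ((t : ℂ) + Complex.I * (ε : ℂ)))))
      (∫ t : ℝ, (-2 * Complex.I) * (Complex.exp (-2 * Complex.I * ((x : ℂ) + y * Complex.I) *
        ((t : ℂ) + Complex.I * (ε : ℂ))) /
        Complex.sinh ((b : ℂ) * ((t : ℂ) + Complex.I * (ε : ℂ))))) x := by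
  have hz : ∀ x : ℝ, |((x : ℂ) + y * Complex.I).im| < b / 2 := by
    intro x; simpa using hy
  refine (hasDerivAt_integral_of_dominated_loc_of_deriv_le (Metric.ball_mem_nhds x one_pos)
    (F' := fun (x t : ℝ) => (-2 * Complex.I) * (Complex.exp (-2 * Complex.I * ((x : ℂ) + y * Complex.I) *
        ((t : ℂ) + Complex.I * (ε : ℂ))) /
        Complex.sinh ((b : ℂ) * ((t : ℂ) + Complex.I * (ε : ℂ)))))
    (bound := fun t : ℝ => 2 * ‖Complex.exp (-2 * Complex.I * (((x + 1 : ℝ) : ℂ) + y * Complex.I) *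
        ((t : ℂ) + Complex.I * (ε : ℂ))) /
        Complex.sinh ((b : ℂ) * ((t : ℂ) + Complex.I * (ε : ℂ)))‖)
    ?_ ?_ ?_ ?_ ?_ ?_).2
  · exact Eventually.of_forall fun x => (aux_int_two b ε hb hε hs _ (hz x)).aestronglyMeasurable
  · exact aux_int_two b ε hb hε hs _ (hz x)
  · exact ((aux_int_one b ε hb hs _ (hz x)).const_mul _).aestronglyMeasurable
  · refine Eventually.of_forall fun t x' hx' => ?_
    rw [norm_mul, norm_div, norm_div, aux_norm_exp, aux_norm_exp]
    have h1 : ‖(-2 * Complex.I : ℂ)‖ = 2 := by simp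
    have h2 : x' ≤ x + 1 := by
      have := abs_lt.1 (by simpa [Real.dist_eq] using hx' : |x' - x| < 1)
      linarith [this.2]
    have h3 : ∀ u : ℝ, ((u : ℂ) + y * Complex.I).re = u := fun u => by simp
    have h4 : ∀ u : ℝ, ((u : ℂ) + y * Complex.I).im = y := fun u => by simp
    rw [h1, h3, h3, h4, h4]
    gcongr
  · exact (aux_int_one b ε hb hs _ (hz (x + 1))).norm.const_mul _
  · refine Eventually.of_forall fun t x' _ => ?_
    have hw := aux_w_ne ε hε t
    have hsn := aux_sinh_ne_s3 b ε t hs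
    set w : ℂ := (t : ℂ) + Complex.I * (ε : ℂ) with hwdef
    have h1 : HasDerivAt (fun x : ℝ => -2 * Complex.I * ((x : ℂ) + y * Complex.I) * w)
        (-2 * Complex.I * w) x' := by
      have := (((Complex.ofRealCLM.hasDerivAt (x := x')).add_const
        (y * Complex.I)).const_mul (-2 * Complex.I)).mul_const w
      simpa using this
    have h2 := h1.cexp.div_const (w * Complex.sinh ((b : ℂ) * w))
    refine h2.congr_deriv ?_
    field_simp

lemma aux_F_tendsto (b ε : ℝ) (hε : 0 < ε)
    (y : ℝ) :
    Tendsto (fun x : ℝ => ∫ t : ℝ,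
      Complex.exp (-2 * Complex.I * ((x : ℂ) + y * Complex.I) * ((t : ℂ) + Complex.I * (ε : ℂ))) /
      (((t : ℂ) + Complex.I * (ε : ℂ)) *
        Complex.sinh ((b : ℂ) * ((t : ℂ) + Complex.I * (ε : ℂ))))) atBot (𝓝 0) := by
  set C : ℝ := ∫ t : ℝ, ‖Complex.exp (-2 * Complex.I * (y * Complex.I) *
      ((t : ℂ) + Complex.I * (ε : ℂ))) /
      (((t : ℂ) + Complex.I * (ε : ℂ)) *
        Complex.sinh ((b : ℂ) * ((t : ℂ) + Complex.I * (ε : ℂ))))‖ with hC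
  have hlim : Tendsto (fun x : ℝ => Real.exp ((2 * ε) * x) * C) atBot (𝓝 0) := by
    have := (Real.tendsto_exp_atBot.comp
      (tendsto_id.const_mul_atBot (by positivity : 0 < 2 * ε))).mul_const C
    simpa using this
  refine squeeze_zero_norm (fun x => ?_) hlim
  refine (norm_integral_le_integral_norm _).trans (le_of_eq ?_)
  rw [hC, ← integral_const_mul]
  congr 1
  ext t
  rw [norm_div, norm_div, aux_norm_exp, aux_norm_exp, ← mul_div_assoc, ← Real.exp_add]
  congr 2
  simp
  ring

lemma aux_main (b ε : ℝ) (hb : 0 < b) (hε : 0 < ε) (hbε : b * ε < π)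
    (z : ℂ) (hz : |z.im| < b / 2) :
    Complex.exp ((1 / 2 : ℂ) * ∫ t : ℝ,
      Complex.exp (-2 * Complex.I * z * ((t : ℂ) + Complex.I * (ε : ℂ))) /
      (((t : ℂ) + Complex.I * (ε : ℂ)) *
        Complex.sinh ((b : ℂ) * ((t : ℂ) + Complex.I * (ε : ℂ))))) *
      (1 + Complex.exp (2 * π * (b : ℂ)⁻¹ * z)) = 1 := by
  have hs : 0 < Real.sin (b * ε) := Real.sin_pos_of_pos_of_lt_pi (by positivity) hbε
  have hbc : (b : ℂ) ≠ 0 := by exact_mod_cast hb.ne'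
  set y := z.im with hy
  set F : ℝ → ℂ := fun x : ℝ => ∫ t : ℝ,
      Complex.exp (-2 * Complex.I * ((x : ℂ) + y * Complex.I) * ((t : ℂ) + Complex.I * (ε : ℂ))) /
      (((t : ℂ) + Complex.I * (ε : ℂ)) *
        Complex.sinh ((b : ℂ) * ((t : ℂ) + Complex.I * (ε : ℂ)))) with hF
  set L : ℝ → ℂ := fun x => Complex.exp ((1 / 2 : ℂ) * F x) *
    (1 + Complex.exp (2 * π * (b : ℂ)⁻¹ * ((x : ℂ) + y * Complex.I))) with hL
  have hd : ∀ x, HasDerivAt L 0 x := by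
    intro x
    have h1 := aux_F_deriv b ε hb hε hs y hz x
    have hG := aux_G b ε hb hε hbε ((x : ℂ) + y * Complex.I) (by simpa using hz)
    rw [integral_const_mul] at h1
    set G : ℂ := ∫ t : ℝ, Complex.exp (-2 * Complex.I * ((x : ℂ) + y * Complex.I) *
        ((t : ℂ) + Complex.I * (ε : ℂ))) /
        Complex.sinh ((b : ℂ) * ((t : ℂ) + Complex.I * (ε : ℂ))) with hGdef
    have h2 : HasDerivAt (fun x : ℝ => 2 * π * (b : ℂ)⁻¹ * ((x : ℂ) + y * Complex.I))
        (2 * π * (b : ℂ)⁻¹) x := by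
      have := ((Complex.ofRealCLM.hasDerivAt (x := x)).add_const
        (y * Complex.I)).const_mul (2 * π * (b : ℂ)⁻¹)
      simpa using this
    have h3 := (h1.const_mul (1 / 2 : ℂ)).cexp.mul (h2.cexp.const_add 1)
    refine h3.congr_deriv ?_
    have h4 : Complex.exp (-(2 * π * ((x : ℂ) + y * Complex.I) / b)) =
        (Complex.exp (2 * π * (b : ℂ)⁻¹ * ((x : ℂ) + y * Complex.I)))⁻¹ := by
      rw [← Complex.exp_neg]
      congr 1
      field_simp
    rw [h4] at hG
    have he := Complex.exp_ne_zero (2 * π * (b : ℂ)⁻¹ * ((x : ℂ) + y * Complex.I))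
    set e := Complex.exp (2 * π * (b : ℂ)⁻¹ * ((x : ℂ) + y * Complex.I)) with hedef
    have hG' : (1 + e) * G = -(2 * π * Complex.I) * (b : ℂ)⁻¹ * e := by
      have : (1 + e) * G = e * ((1 + e⁻¹) * G) := by field_simp; ring
      rw [this, hG]
      ring
    linear_combination (-Complex.I * Complex.exp ((1 / 2 : ℂ) * F x)) * hG' +
      (Complex.exp ((1 / 2 : ℂ) * F x) * 2 * π * (b : ℂ)⁻¹ * e) * Complex.I_sq
  have hconst : ∀ x x' : ℝ, L x = L x' :=
    is_const_of_deriv_eq_zero (fun x => (hd x).differentiableAt) (fun x => (hd x).deriv)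
  have hlim : Tendsto L atBot (𝓝 1) := by
    have h1 := aux_F_tendsto b ε hε y
    have h2 : Tendsto (fun x : ℝ => Complex.exp (2 * π * (b : ℂ)⁻¹ * ((x : ℂ) + y * Complex.I)))
        atBot (𝓝 0) := by
      rw [tendsto_zero_iff_norm_tendsto_zero]
      have : (fun x : ℝ => ‖Complex.exp (2 * π * (b : ℂ)⁻¹ * ((x : ℂ) + y * Complex.I))‖) =
          fun x : ℝ => Real.exp ((2 * π * b⁻¹) * x) := by
        ext x
        rw [Complex.norm_exp]
        congr 1
        rw [show (2 * π * (b : ℂ)⁻¹ : ℂ) = ((2 * π * b⁻¹ : ℝ) : ℂ) by push_cast; rfl,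
          Complex.re_ofReal_mul]
        simp
      rw [this]
      exact Real.tendsto_exp_atBot.comp (tendsto_id.const_mul_atBot (by positivity))
    have h3 := ((h1.const_mul (1 / 2 : ℂ)).cexp).mul (h2.const_add 1)
    have h4 : Complex.exp ((1 / 2 : ℂ) * 0) * (1 + 0) = 1 := by simp
    rw [h4] at h3
    exact h3
  have hL1 : L z.re = 1 := by
    refine tendsto_nhds_unique ?_ hlim
    rw [show L = fun _ => L z.re from funext fun x => hconst x _]
    exact tendsto_const_nhds
  have hzz : (z.re : ℂ) + y * Complex.I = z := Complex.re_add_im z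
  simp only [hL, hF, hzz] at hL1
  exact hL1

/-- the `b⁻¹`-shift equation
`e_b(z − ib⁻¹/2) = (1 + e^{2πb⁻¹z})·e_b(z + ib⁻¹/2)` on the strip `|Im z| < b/2`. -/
theorem statement3 (b : ℝ) (hb : 0 < b) (z : ℂ) (hz : |z.im| < b / 2) :
    eb b (z - Complex.I * (b : ℂ)⁻¹ / 2) =
      (1 + Complex.exp (2 * (π : ℂ) * (b : ℂ)⁻¹ * z)) *
        eb b (z + Complex.I * (b : ℂ)⁻¹ / 2) := by
  have hb' : 0 < b⁻¹ := inv_pos.2 hb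
  have hbc : (b : ℂ) ≠ 0 := by exact_mod_cast hb.ne'
  unfold eb ebE
  have hm : 0 < min b b⁻¹ := lt_min hb hb'
  set ε : ℝ := π * min b b⁻¹ / 2 with hεdef
  have hε : 0 < ε := by have := Real.pi_pos; positivity
  have hbε : b * ε < π := by
    have h1 : b * min b b⁻¹ ≤ b * b⁻¹ := by gcongr; exact min_le_right _ _
    rw [mul_inv_cancel₀ hb.ne'] at h1
    rw [hεdef]
    nlinarith [Real.pi_pos]
  have hbε' : b⁻¹ * ε < π := by
    have h1 : b⁻¹ * min b b⁻¹ ≤ b⁻¹ * b := by gcongr; exact min_le_left _ _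
    rw [inv_mul_cancel₀ hb.ne'] at h1
    rw [hεdef]
    nlinarith [Real.pi_pos]
  have hs : 0 < Real.sin (b * ε) := Real.sin_pos_of_pos_of_lt_pi (by positivity) hbε
  have hs' : 0 < Real.sin (b⁻¹ * ε) := Real.sin_pos_of_pos_of_lt_pi (by positivity) hbε'
  have him : (Complex.I * (b : ℂ)⁻¹ / 2) = ((b⁻¹ / 2 : ℝ) : ℂ) * Complex.I := by
    push_cast; ring
  rw [abs_lt] at hz
  have iA : Integrable (ebIntegrand b ε (z - Complex.I * (b : ℂ)⁻¹ / 2)) := by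
    apply aux_int_eb b ε hb hε hs hs'
    rw [him, Complex.sub_im, Complex.im_ofReal_mul, Complex.I_im, abs_lt]
    constructor <;> linarith
  have iB : Integrable (ebIntegrand b ε (z + Complex.I * (b : ℂ)⁻¹ / 2)) := by
    apply aux_int_eb b ε hb hε hs hs'
    rw [him, Complex.add_im, Complex.im_ofReal_mul, Complex.I_im, abs_lt]
    constructor <;> linarith
  have hdiff : (∫ t : ℝ, ebIntegrand b ε (z - Complex.I * (b : ℂ)⁻¹ / 2) t) -
      (∫ t : ℝ, ebIntegrand b ε (z + Complex.I * (b : ℂ)⁻¹ / 2) t) =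
      -2 * ∫ t : ℝ, Complex.exp (-2 * Complex.I * z * ((t : ℂ) + Complex.I * (ε : ℂ))) /
      (((t : ℂ) + Complex.I * (ε : ℂ)) *
        Complex.sinh ((b : ℂ) * ((t : ℂ) + Complex.I * (ε : ℂ)))) := by
    rw [← integral_sub iA iB, ← integral_const_mul]
    congr 1
    ext t
    unfold ebIntegrand
    have hw := aux_w_ne ε hε t
    have hsn := aux_sinh_ne_s3 b ε t hs
    have hsn' : Complex.sinh ((b : ℂ)⁻¹ * ((t : ℂ) + Complex.I * (ε : ℂ))) ≠ 0 := by
      have := aux_sinh_ne_s3 b⁻¹ ε t hs'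
      simpa using this
    set w : ℂ := (t : ℂ) + Complex.I * (ε : ℂ) with hwdef
    have e1 : Complex.exp (-2 * Complex.I * (z - Complex.I * (b : ℂ)⁻¹ / 2) * w) =
        Complex.exp (-2 * Complex.I * z * w) * Complex.exp (-((b : ℂ)⁻¹ * w)) := by
      rw [← Complex.exp_add]
      congr 1
      linear_combination ((b : ℂ)⁻¹ * w) * Complex.I_sq
    have e2 : Complex.exp (-2 * Complex.I * (z + Complex.I * (b : ℂ)⁻¹ / 2) * w) =
        Complex.exp (-2 * Complex.I * z * w) * Complex.exp ((b : ℂ)⁻¹ * w) := by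
      rw [← Complex.exp_add]
      congr 1
      linear_combination (-(b : ℂ)⁻¹ * w) * Complex.I_sq
    have e3 : Complex.exp ((b : ℂ)⁻¹ * w) = Complex.exp (-((b : ℂ)⁻¹ * w)) +
        2 * Complex.sinh ((b : ℂ)⁻¹ * w) := by
      rw [Complex.sinh]; ring
    rw [e1, e2, e3]
    set S := Complex.sinh ((b : ℂ)⁻¹ * w)
    set T := Complex.sinh ((b : ℂ) * w)
    rw [← sub_div, ← mul_div_assoc, div_eq_div_iff (by positivity) (by positivity)]
    ring
  have hmain := aux_main b ε hb hε hbε z (abs_lt.2 hz)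
  set J : ℂ := ∫ t : ℝ, Complex.exp (-2 * Complex.I * z * ((t : ℂ) + Complex.I * (ε : ℂ))) /
      (((t : ℂ) + Complex.I * (ε : ℂ)) *
        Complex.sinh ((b : ℂ) * ((t : ℂ) + Complex.I * (ε : ℂ))))
  set A : ℂ := ∫ t : ℝ, ebIntegrand b ε (z - Complex.I * (b : ℂ)⁻¹ / 2) t
  set B : ℂ := ∫ t : ℝ, ebIntegrand b ε (z + Complex.I * (b : ℂ)⁻¹ / 2) t
  have hB : (1 / 4 : ℂ) * B = (1 / 2 : ℂ) * J + (1 / 4 : ℂ) * A := by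
    linear_combination (-1 / 4 : ℂ) * hdiff
  rw [hB, Complex.exp_add]
  linear_combination (-Complex.exp ((1 / 4 : ℂ) * A)) * hmain

end
end
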